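/- arXiv:0709.3993 — 3 statements merged into one kernel-verified Lean document; each statement's English description precedes it below -/
import Mathlib

section
/- Let P be an (m₁,m₂)-homogeneous (weight 1) plurisubharmonic, non-pluriharmonic real polynomial on C² having Property (B). Then there exist a rational number q* and a holomorphic polynomial F on C² that is (m₁,m₂)-homogeneous with weight q* such that P is harmonic along the smooth part of every level set of F. -/
/-!
Write `δ_s (z₁, z₂) = (s^{m₂} z₁, s^{m₁} z₂)`, so that `P ∘ δ_s = s^{m₁m₂} P` for real `s > 0`, and
write `P_{jk̄}` for the entries of the Levi matrix of `P`.

*A linear equation for the level function.* Let `G` be entire with `P` harmonic along its level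
curves. Through each noncritical point of `G` passes an injective holomorphic disc inside the level
curve, and the chain rule `Δ(P ∘ φ) = 4 L_P(φ; φ')` shows that its tangent is a null vector of the
Levi form. Plurisubharmonicity puts this null vector in the kernel of the Levi matrix, which says
that `dG(-P_{2k̄}, P_{1k̄}) = 0` for `k = 1, 2` (`level_pde`).

*Passage to a homogeneous component.* If `H` is the function from Property (B), then `P` is harmonic
along the level curves of each `H ∘ δ_s`, `s > 0`, so the equation holds for all of them. It is
linear, hence passes to every coefficient of the expansion of `H ∘ δ_s` in powers of `s`
(`hasDerivAt_hcomp_zero`). These coefficients `hcomp H m₂ m₁ n` are weighted homogeneous, hence of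
polynomial growth, hence polynomials (`isPolyMap2_hcomp`). Unless `H` is constant, one of them with
`n ≥ 1` is not zero (`const_of_hcomp_eq_zero`); this is `F`. If `H` is constant, `F = 0` works.

*Back to harmonicity* (`harmonicAlong_levels`). Now `dF` is proportional to each `(P_{1k̄}, P_{2k̄})`.
On a level `F = c ≠ 0` Euler's identity gives `dF ≠ 0`, so a vector tangent to the level is in the
kernel of the Levi matrix. On `F = 0` the differential may vanish identically along a component
when `F` has multiple factors, so another argument is needed. There the Euler field spans the
tangent direction (`eq_zero_of_transverse`), and it is in the kernel of the Levi matrix because its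
pairing with `(P_{1k̄}, P_{2k̄})`, multiplied by `dF`, is `n F · (P_{1k̄}, P_{2k̄})`, and the order of
vanishing of `F` along a line exceeds that of its derivative (`euler_contraction_zero`).
-/

open Complex ComplexConjugate Metric Set

noncomputable section

/-- Wirtinger derivative `∂f` in the complex direction `e`. -/
def wd (f : ℂ × ℂ → ℂ) (e : ℂ × ℂ) (z : ℂ × ℂ) : ℂ :=
  (1 / 2) * (fderiv ℝ f z e - Complex.I * fderiv ℝ f z (Complex.I • e))

/-- Conjugate Wirtinger derivative `∂̄f` in the complex direction `e`. -/
def wdbar (f : ℂ × ℂ → ℂ) (e : ℂ × ℂ) (z : ℂ × ℂ) : ℂ :=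
  (1 / 2) * (fderiv ℝ f z e + Complex.I * fderiv ℝ f z (Complex.I • e))

/-- Mixed second derivative `∂²P/∂z_(ej)∂z̄_(ek)` of a real-valued function. -/
def mixedDeriv (P : ℂ × ℂ → ℝ) (ej ek : ℂ × ℂ) (z : ℂ × ℂ) : ℂ :=
  wd (wdbar (fun w => (P w : ℂ)) ek) ej z

/-- The Levi form of `P` at `z` in the direction `v`. -/
def leviForm (P : ℂ × ℂ → ℝ) (z v : ℂ × ℂ) : ℂ :=
  mixedDeriv P (1, 0) (1, 0) z * v.1 * conj v.1 +
  mixedDeriv P (1, 0) (0, 1) z * v.1 * conj v.2 +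
  mixedDeriv P (0, 1) (1, 0) z * v.2 * conj v.1 +
  mixedDeriv P (0, 1) (0, 1) z * v.2 * conj v.2

/-- `P` is plurisubharmonic on all of `ℂ²`. -/
def IsPsh (P : ℂ × ℂ → ℝ) : Prop := ∀ z v, 0 ≤ (leviForm P z v).re

/-- `P` is strictly plurisubharmonic at `z`. -/
def IsStrictPshAt (P : ℂ × ℂ → ℝ) (z : ℂ × ℂ) : Prop :=
  ∀ v, v ≠ 0 → 0 < (leviForm P z v).re

/-- The Levi-degeneracy set of `P`. -/
def leviDegen (P : ℂ × ℂ → ℝ) : Set (ℂ × ℂ) :=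
  {z | ¬ IsStrictPshAt P z}

/-- One-variable Wirtinger derivative. -/
def wd1 (f : ℂ → ℂ) (z : ℂ) : ℂ :=
  (1 / 2) * (fderiv ℝ f z 1 - Complex.I * fderiv ℝ f z Complex.I)

def wdbar1 (f : ℂ → ℂ) (z : ℂ) : ℂ :=
  (1 / 2) * (fderiv ℝ f z 1 + Complex.I * fderiv ℝ f z Complex.I)

/-- The Laplacian of a function on `ℂ`, as `4 ∂∂̄`. -/
def lap (u : ℂ → ℝ) (z : ℂ) : ℂ := 4 * wd1 (wdbar1 fun w => (u w : ℂ)) z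

def IsHarmonic (u : ℂ → ℝ) : Prop := ∀ z, lap u z = 0

def Subharmonic (u : ℂ → ℝ) : Prop := ∀ z, 0 ≤ (lap u z).re

/-- The Laplacian of a function on `ℂ² ≅ ℝ⁴`. -/
def lap2 (P : ℂ × ℂ → ℝ) (z : ℂ × ℂ) : ℂ :=
  4 * (mixedDeriv P (1, 0) (1, 0) z + mixedDeriv P (0, 1) (0, 1) z)

/-- `P` is a real-valued polynomial in `z₁, z̄₁, z₂, z̄₂`. -/
def IsRealPoly2 (P : ℂ × ℂ → ℝ) : Prop :=
  ∃ Q : MvPolynomial (Fin 4) ℂ,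
    ∀ z : ℂ × ℂ, (P z : ℂ) = MvPolynomial.eval ![z.1, conj z.1, z.2, conj z.2] Q

/-- `u` is a real-valued polynomial in `z, z̄`. -/
def IsRealPoly1 (u : ℂ → ℝ) : Prop :=
  ∃ Q : MvPolynomial (Fin 2) ℂ,
    ∀ z : ℂ, (u z : ℂ) = MvPolynomial.eval ![z, conj z] Q

/-- `F` is a holomorphic polynomial map on `ℂ²`. -/
def IsPolyMap2 (F : ℂ × ℂ → ℂ) : Prop :=
  ∃ Q : MvPolynomial (Fin 2) ℂ, ∀ z : ℂ × ℂ, F z = MvPolynomial.eval ![z.1, z.2] Q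

/-- `P` has no pluriharmonic terms: in its (unique) monomial expansion in
`z₁, z̄₁, z₂, z̄₂` every monomial involves both a conjugated and an
unconjugated variable. Indexing: `0 ↦ z₁`, `1 ↦ z̄₁`, `2 ↦ z₂`, `3 ↦ z̄₂`. -/
def NoPluriharmonicTerms (P : ℂ × ℂ → ℝ) : Prop :=
  ∃ Q : MvPolynomial (Fin 4) ℂ,
    (∀ z : ℂ × ℂ, (P z : ℂ) = MvPolynomial.eval ![z.1, conj z.1, z.2, conj z.2] Q) ∧
    ∀ m ∈ Q.support, (m 1 ≠ 0 ∨ m 3 ≠ 0) ∧ (m 0 ≠ 0 ∨ m 2 ≠ 0)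

/-- `P` is pluriharmonic: the real part of an entire function. -/
def IsPluriharmonic (P : ℂ × ℂ → ℝ) : Prop :=
  ∃ f : ℂ × ℂ → ℂ, Differentiable ℂ f ∧ ∀ z, P z = (f z).re

/-- `P` is homogeneous of degree `d`. -/
def HomogeneousDeg (P : ℂ × ℂ → ℝ) (d : ℕ) : Prop :=
  ∀ t : ℝ, 0 < t → ∀ z : ℂ × ℂ, P (t • z) = t ^ d * P z

/-- The directions `ζ` such that `P` is harmonic along the line `{(ζw, w)}`. -/
def harmDirs (P : ℂ × ℂ → ℝ) : Set ℂ := {ζ | IsHarmonic fun w => P (ζ * w, w)}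

/-- The union of all complex lines through `0` along which `P` is harmonic. -/
def linesUnion (P : ℂ × ℂ → ℝ) : Set (ℂ × ℂ) :=
  {z | (∃ ζ ∈ harmDirs P, z.1 = ζ * z.2) ∨
       (IsHarmonic (fun w => P (w, 0)) ∧ z.2 = 0)}

/-- `P` is harmonic along the smooth part of the set `V`: for every injective
holomorphic parametrization by the unit disc of a piece of `V`, the pullback
of `P` is harmonic. -/
def HarmonicAlong (P : ℂ × ℂ → ℝ) (V : Set (ℂ × ℂ)) : Prop :=
  ∀ φ : ℂ → ℂ × ℂ, DifferentiableOn ℂ φ (Metric.ball 0 1) →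
    Set.InjOn φ (Metric.ball 0 1) → φ '' Metric.ball 0 1 ⊆ V →
    ∀ ζ ∈ Metric.ball (0 : ℂ) 1, lap (fun w => P (φ w)) ζ = 0

/-- `S` contains no complex-analytic subvariety of positive dimension. -/
def NoPosDimVariety (S : Set (ℂ × ℂ)) : Prop :=
  ∀ φ : ℂ → ℂ × ℂ, DifferentiableOn ℂ φ (Metric.ball 0 1) →
    φ '' Metric.ball 0 1 ⊆ S →
    ∀ x ∈ Metric.ball (0 : ℂ) 1, ∀ y ∈ Metric.ball (0 : ℂ) 1, φ x = φ y

/-- Property (A) for a homogeneous polynomial `P`. -/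
def PropertyA (P : ℂ × ℂ → ℝ) : Prop :=
  NoPosDimVariety (leviDegen P \ linesUnion P) ∧
  ∃ W : Set (ℂ × ℂ), IsClosed W ∧ (∀ z ∈ W, ∀ t : ℝ, 0 < t → t • z ∈ W) ∧
    leviDegen P \ linesUnion P ⊆ W ∧ interior W ∩ linesUnion P = ∅

/-- Property (B): there is an entire function all of whose level curves have
smooth part along which `P` is harmonic. -/
def PropertyB (P : ℂ × ℂ → ℝ) : Prop :=
  ∃ H : ℂ × ℂ → ℂ, Differentiable ℂ H ∧ ∀ c : ℂ, HarmonicAlong P (H ⁻¹' {c})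

/-- The anisotropic dilation `(t^{1/m₁}z₁, t^{1/m₂}z₂)`. -/
def wdil (m₁ m₂ : ℕ) (t : ℝ) (z : ℂ × ℂ) : ℂ × ℂ :=
  (((t ^ ((m₁ : ℝ)⁻¹) : ℝ) : ℂ) * z.1, ((t ^ ((m₂ : ℝ)⁻¹) : ℝ) : ℂ) * z.2)

/-- `(m₁,m₂)`-homogeneity with weight `r`. -/
def WHomog (m₁ m₂ : ℕ) (P : ℂ × ℂ → ℝ) (r : ℝ) : Prop :=
  ∀ t : ℝ, 0 < t → ∀ z : ℂ × ℂ, P (wdil m₁ m₂ t z) = t ^ r * P z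

/-- The weighted curve `{z₁^a = ζ z₂^b}`. -/
def wCurve (a b : ℕ) (ζ : ℂ) : Set (ℂ × ℂ) := {z | z.1 ^ a = ζ * z.2 ^ b}

/-- The parameters `ζ ∈ ℂ` of weighted curves along which `P` is harmonic. -/
def wHarmDirs (P : ℂ × ℂ → ℝ) (a b : ℕ) : Set ℂ :=
  {ζ | HarmonicAlong P (wCurve a b ζ)}

/-- The union of all curves in `E(P)` (including the one for `ζ = ∞`). -/
def wEUnion (P : ℂ × ℂ → ℝ) (a b : ℕ) : Set (ℂ × ℂ) :=
  {z | (∃ ζ ∈ wHarmDirs P a b, z.1 ^ a = ζ * z.2 ^ b) ∨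
       (HarmonicAlong P {w : ℂ × ℂ | w.2 = 0} ∧ z.2 = 0)}

/-- Property (A) in the `(m₁,m₂)`-homogeneous setting (with wedges). -/
def PropertyAW (m₁ m₂ : ℕ) (P : ℂ × ℂ → ℝ) : Prop :=
  NoPosDimVariety (leviDegen P \ wEUnion P (m₁ / Nat.gcd m₁ m₂) (m₂ / Nat.gcd m₁ m₂)) ∧
  ∃ W : Set (ℂ × ℂ), IsClosed W ∧ (∀ z ∈ W, ∀ t : ℝ, 0 < t → wdil m₁ m₂ t z ∈ W) ∧
    leviDegen P \ wEUnion P (m₁ / Nat.gcd m₁ m₂) (m₂ / Nat.gcd m₁ m₂) ⊆ W ∧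
    interior W ∩ wEUnion P (m₁ / Nat.gcd m₁ m₂) (m₂ / Nat.gcd m₁ m₂) = ∅

/-! ### The Levi form along holomorphic curves -/

lemma fderiv_prod_expand (f : ℂ × ℂ → ℂ) (z v : ℂ × ℂ) :
    fderiv ℝ f z v = (v.1.re : ℂ) * fderiv ℝ f z (1, 0) + (v.1.im : ℂ) * fderiv ℝ f z (I, 0)
      + (v.2.re : ℂ) * fderiv ℝ f z (0, 1) + (v.2.im : ℂ) * fderiv ℝ f z (0, I) := by
  have hv : v = v.1.re • ((1 : ℂ), (0 : ℂ)) + v.1.im • (I, (0 : ℂ))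
      + v.2.re • ((0 : ℂ), (1 : ℂ)) + v.2.im • ((0 : ℂ), I) := by
    apply Prod.ext <;> simp [Complex.re_add_im]
  conv_lhs => rw [hv]
  simp only [map_add, map_smul, Complex.real_smul]

/-- The Wirtinger derivative is complex linear in the direction. -/
lemma wd_linear (f : ℂ × ℂ → ℂ) (v z : ℂ × ℂ) :
    wd f v z = v.1 * wd f (1, 0) z + v.2 * wd f (0, 1) z := by
  unfold wd
  rw [fderiv_prod_expand f z v, fderiv_prod_expand f z (I • v),
    fderiv_prod_expand f z (I • (1, 0)), fderiv_prod_expand f z (I • (0, 1))]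
  have h1 := Complex.re_add_im v.1
  have h2 := Complex.re_add_im v.2
  simp only [Prod.smul_fst, Prod.smul_snd, smul_eq_mul, Complex.mul_re, Complex.mul_im, Complex.I_re,
    Complex.I_im, Complex.zero_re, Complex.zero_im, mul_zero, mul_one, zero_mul,
    one_mul, zero_sub, add_zero, zero_add, Complex.ofReal_zero, Complex.ofReal_one,
    Complex.ofReal_neg]
  linear_combination (1/2) * (fderiv ℝ f z (1, 0) - I * fderiv ℝ f z (I, 0)) * h1
    + (1/2) * (fderiv ℝ f z (0, 1) - I * fderiv ℝ f z (0, I)) * h2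
    + (1/2) * ((v.1.im : ℂ) * fderiv ℝ f z (I, 0) + v.2.im * fderiv ℝ f z (0, I)) * I_sq

/-- The conjugate Wirtinger derivative is conjugate linear in the direction. -/
lemma wdbar_linear (f : ℂ × ℂ → ℂ) (v z : ℂ × ℂ) :
    wdbar f v z = conj v.1 * wdbar f (1, 0) z + conj v.2 * wdbar f (0, 1) z := by
  unfold wdbar
  rw [fderiv_prod_expand f z v, fderiv_prod_expand f z (I • v),
    fderiv_prod_expand f z (I • (1, 0)), fderiv_prod_expand f z (I • (0, 1))]
  have h1 : conj v.1 = v.1.re - v.1.im * I := by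
    apply Complex.ext <;> simp
  have h2 : conj v.2 = v.2.re - v.2.im * I := by
    apply Complex.ext <;> simp
  rw [h1, h2]
  simp only [Prod.smul_fst, Prod.smul_snd, smul_eq_mul, Complex.mul_re, Complex.mul_im, Complex.I_re,
    Complex.I_im, Complex.zero_re, Complex.zero_im, mul_zero, mul_one, zero_mul,
    one_mul, zero_sub, add_zero, zero_add, Complex.ofReal_zero, Complex.ofReal_one,
    Complex.ofReal_neg]
  linear_combination
     (1/2) * ((v.1.im : ℂ) * fderiv ℝ f z (I, 0) + v.2.im * fderiv ℝ f z (0, I)) * I_sq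

lemma contDiff_of_isRealPoly2 {P : ℂ × ℂ → ℝ} (hP : IsRealPoly2 P) (n : WithTop ℕ∞) :
    ContDiff ℝ n (fun w => (P w : ℂ)) := by
  obtain ⟨Q, hQ⟩ := hP
  simp_rw [hQ, MvPolynomial.eval_eq']
  refine ContDiff.sum fun m _ => contDiff_const.mul (contDiff_prod fun i _ => ContDiff.pow ?_ _)
  fin_cases i
  · exact contDiff_fst
  · exact Complex.conjCLE.contDiff.comp contDiff_fst
  · exact contDiff_snd
  · exact Complex.conjCLE.contDiff.comp contDiff_snd

lemma contDiff_wdbar {f : ℂ × ℂ → ℂ} (hf : ContDiff ℝ 2 f) (e : ℂ × ℂ) :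
    ContDiff ℝ 1 (wdbar f e) := by
  have h : ContDiff ℝ 1 (fderiv ℝ f) := hf.fderiv_right (by norm_num)
  exact contDiff_const.mul ((h.clm_apply contDiff_const).add
    (contDiff_const.mul (h.clm_apply contDiff_const)))

lemma continuous_mixedDeriv {P : ℂ × ℂ → ℝ} (hP : ContDiff ℝ 2 fun w => (P w : ℂ))
    (ej ek : ℂ × ℂ) : Continuous (mixedDeriv P ej ek) := by
  have h := (contDiff_wdbar hP ek).continuous_fderiv (by norm_num)
  exact continuous_const.mul ((h.clm_apply continuous_const).sub
    (continuous_const.mul (h.clm_apply continuous_const)))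

/-- `∂²P/∂z_k∂z̄_j` is the conjugate of `∂²P/∂z_j∂z̄_k`: the Levi matrix of a real function is
Hermitian, by symmetry of the second real derivative. -/
lemma mixedDeriv_conj {P : ℂ × ℂ → ℝ} (hP : ContDiff ℝ 2 fun w => (P w : ℂ))
    (ej ek z : ℂ × ℂ) : conj (mixedDeriv P ej ek z) = mixedDeriv P ek ej z := by
  set f : ℂ × ℂ → ℂ := fun w => (P w : ℂ) with hf
  have hd : Differentiable ℝ (fderiv ℝ f) :=
    ((hP.fderiv_right (m := 1) (by norm_num)).differentiable (by norm_num))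
  have hsym : IsSymmSndFDerivAt ℝ f z := hP.contDiffAt.isSymmSndFDerivAt (by simp)
  have key : ∀ a e : ℂ × ℂ, fderiv ℝ (wdbar f e) z a = (1 / 2) * (fderiv ℝ (fderiv ℝ f) z a e
      + I * fderiv ℝ (fderiv ℝ f) z a (I • e)) := by
    intro a e
    have h1 : ∀ e, HasFDerivAt (fun w => fderiv ℝ f w e)
        ((fderiv ℝ (fderiv ℝ f) z).flip e) z := fun e => by
      simpa using (hd z).hasFDerivAt.clm_apply (hasFDerivAt_const e z)
    have h2 : HasFDerivAt (wdbar f e) _ z := ((h1 e).add ((h1 (I • e)).const_mul I)).const_mul (1 / 2)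
    rw [h2.fderiv]
    simp [mul_add]
  have hreal : ∀ a b : ℂ × ℂ, conj (fderiv ℝ (fderiv ℝ f) z a b)
      = fderiv ℝ (fderiv ℝ f) z a b := by
    intro a b
    have h1 : HasFDerivAt (fun w => fderiv ℝ f w b)
        ((fderiv ℝ (fderiv ℝ f) z).flip b) z := by
      simpa using (hd z).hasFDerivAt.clm_apply (hasFDerivAt_const b z)
    have hr : ∀ w, conj (fderiv ℝ f w b) = fderiv ℝ f w b := by
      intro w
      have h3 : HasFDerivAt f (fderiv ℝ f w) w := (hP.differentiable (by norm_num) w).hasFDerivAt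
      have h4 : HasFDerivAt (fun w => Complex.conjCLE (f w)) _ w :=
        Complex.conjCLE.hasFDerivAt.comp w h3
      have h5 : (fun w => Complex.conjCLE (f w)) = f := by
        funext w; simp [hf]
      rw [h5] at h4
      have := congrArg (fun T => T b) (h4.unique h3)
      simpa using this
    have h4 : HasFDerivAt (fun w => Complex.conjCLE (fderiv ℝ f w b)) _ z :=
        Complex.conjCLE.hasFDerivAt.comp z h1
    have h5 : (fun w => Complex.conjCLE (fderiv ℝ f w b)) = fun w => fderiv ℝ f w b := by
      funext w; exact hr w
    rw [h5] at h4
    have := congrArg (fun T => T a) (h4.unique h1)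
    simpa using this
  unfold mixedDeriv wd
  rw [key, key, key, key]
  simp only [map_mul, map_sub, map_add, hreal, Complex.conj_I, map_div₀, map_one, map_ofNat]
  rw [hsym ej ek, hsym ej (I • ek), hsym (I • ej) ek, hsym (I • ej) (I • ek)]
  ring

/-- Chain rule for the Laplacian: `Δ(P ∘ φ) = 4 L_P(φ; φ')` for holomorphic `φ`. -/
lemma lap_comp {P : ℂ × ℂ → ℝ} (hP : ContDiff ℝ 2 fun w => (P w : ℂ)) {φ : ℂ → ℂ × ℂ}
    (hφ : DifferentiableOn ℂ φ (ball 0 1)) {ζ : ℂ} (hζ : ζ ∈ ball (0 : ℂ) 1) :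
    lap (fun w => P (φ w)) ζ = 4 * leviForm P (φ ζ) (deriv φ ζ) := by
  set f : ℂ × ℂ → ℂ := fun w => (P w : ℂ) with hf
  have hder : ∀ w ∈ ball (0 : ℂ) 1, HasDerivAt φ (deriv φ w) w := fun w hw =>
    (hφ.differentiableAt (isOpen_ball.mem_nhds hw)).hasDerivAt
  have hreal : ∀ w ∈ ball (0 : ℂ) 1, HasFDerivAt φ
      ((ContinuousLinearMap.toSpanSingleton ℂ (deriv φ w)).restrictScalars ℝ) w := fun w hw =>
    (hder w hw).hasFDerivAt.restrictScalars ℝ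
  have step1 : ∀ w ∈ ball (0 : ℂ) 1, wdbar1 (fun w => (P (φ w) : ℂ)) w =
      conj (deriv φ w).1 * wdbar f (1, 0) (φ w) + conj (deriv φ w).2 * wdbar f (0, 1) (φ w) := by
    intro w hw
    have h1 : HasFDerivAt f (fderiv ℝ f (φ w)) (φ w) :=
      (hP.differentiable (by norm_num) _).hasFDerivAt
    have h2 : HasFDerivAt (fun w => (P (φ w) : ℂ)) _ w := h1.comp w (hreal w hw)
    rw [← wdbar_linear]
    unfold wdbar1 wdbar
    rw [h2.fderiv]
    simp
  have hev : (wdbar1 fun w => (P (φ w) : ℂ)) =ᶠ[nhds ζ] fun w =>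
      conj (deriv φ w).1 * wdbar f (1, 0) (φ w) + conj (deriv φ w).2 * wdbar f (0, 1) (φ w) := by
    filter_upwards [isOpen_ball.mem_nhds hζ] with w hw using step1 w hw
  have hd2 : HasDerivAt (deriv φ) (deriv (deriv φ) ζ) ζ :=
    ((hφ.deriv isOpen_ball).differentiableAt (isOpen_ball.mem_nhds hζ)).hasDerivAt
  have hd2r : HasFDerivAt (deriv φ) _ ζ := hd2.hasFDerivAt.restrictScalars ℝ
  have hc1 : HasFDerivAt (fun w => conj (deriv φ w).1) _ ζ :=
    Complex.conjCLE.hasFDerivAt.comp ζ hd2r.fst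
  have hc2 : HasFDerivAt (fun w => conj (deriv φ w).2) _ ζ :=
    Complex.conjCLE.hasFDerivAt.comp ζ hd2r.snd
  have hg : ∀ e, HasFDerivAt (fun w => wdbar f e (φ w)) _ ζ := fun e =>
    (((contDiff_wdbar hP e).differentiable (by norm_num) (φ ζ)).hasFDerivAt).comp ζ (hreal ζ hζ)
  have htot : HasFDerivAt (fun w => conj (deriv φ w).1 * wdbar f (1, 0) (φ w)
      + conj (deriv φ w).2 * wdbar f (0, 1) (φ w)) _ ζ := (hc1.mul (hg (1, 0))).add (hc2.mul (hg (0, 1)))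
  unfold lap
  rw [wd1, hev.fderiv_eq, HasFDerivAt.fderiv htot]
  have hm : ∀ e, mixedDeriv P (1, 0) e (φ ζ) * (deriv φ ζ).1
      + mixedDeriv P (0, 1) e (φ ζ) * (deriv φ ζ).2 = wd (wdbar f e) (deriv φ ζ) (φ ζ) := by
    intro e
    rw [wd_linear]
    simp only [mixedDeriv]
    ring
  have hl : leviForm P (φ ζ) (deriv φ ζ) = conj (deriv φ ζ).1 * wd (wdbar f (1, 0)) (deriv φ ζ) (φ ζ)
      + conj (deriv φ ζ).2 * wd (wdbar f (0, 1)) (deriv φ ζ) (φ ζ) := by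
    rw [← hm, ← hm, leviForm]; ring
  rw [hl]
  simp only [wd]
  simp
  ring_nf
  simp

/-- A null vector of a positive semidefinite Levi form lies in the kernel of the Levi matrix. -/
lemma levi_kernel {P : ℂ × ℂ → ℝ} (hP : ContDiff ℝ 2 fun w => (P w : ℂ)) (hpsh : IsPsh P)
    {z v : ℂ × ℂ} (h0 : leviForm P z v = 0) (e : ℂ × ℂ) (he : e = (1, 0) ∨ e = (0, 1)) :
    mixedDeriv P (1, 0) e z * v.1 + mixedDeriv P (0, 1) e z * v.2 = 0 := by
  obtain ⟨A, hA⟩ : ∃ A, A = mixedDeriv P (1, 0) (1, 0) z * v.1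
      + mixedDeriv P (0, 1) (1, 0) z * v.2 := ⟨_, rfl⟩
  obtain ⟨B, hB⟩ : ∃ B, B = mixedDeriv P (1, 0) (0, 1) z * v.1
      + mixedDeriv P (0, 1) (0, 1) z * v.2 := ⟨_, rfl⟩
  -- the pairing `⟨Lv, u⟩` appears to first order in `L(v + εu)`
  have hAc : conj A = mixedDeriv P (1, 0) (1, 0) z * conj v.1
      + mixedDeriv P (1, 0) (0, 1) z * conj v.2 := by
    rw [hA, map_add, map_mul, map_mul, mixedDeriv_conj hP, mixedDeriv_conj hP]
  have hBc : conj B = mixedDeriv P (0, 1) (1, 0) z * conj v.1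
      + mixedDeriv P (0, 1) (0, 1) z * conj v.2 := by
    rw [hB, map_add, map_mul, map_mul, mixedDeriv_conj hP, mixedDeriv_conj hP]
  have hexp : ∀ ε : ℝ, leviForm P z (v + (ε : ℂ) • (A, B)) =
      2 * ε * (Complex.normSq A + Complex.normSq B : ℝ) + ε ^ 2 * leviForm P z (A, B) := by
    intro ε
    have h1 := Complex.mul_conj A
    have h2 := Complex.mul_conj B
    push_cast
    rw [← h1, ← h2]
    have h3 : ∀ a b : ℂ, leviForm P z (v + (ε : ℂ) • (a, b)) = leviForm P z v +
        ε * (A * conj a + B * conj b) + ε * (conj A * a + conj B * b)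
        + ε ^ 2 * leviForm P z (a, b) := by
      intro a b
      rw [hAc, hBc, hA, hB]
      simp only [leviForm, Prod.fst_add, Prod.snd_add, Prod.smul_fst, Prod.smul_snd, smul_eq_mul,
        map_add, map_mul, Complex.conj_ofReal]
      ring
    rw [h3, h0]; ring
  have hzero : Complex.normSq A + Complex.normSq B = 0 := by
    set N := Complex.normSq A + Complex.normSq B with hN
    have hN0 : 0 ≤ N := add_nonneg (Complex.normSq_nonneg _) (Complex.normSq_nonneg _)
    set K := (leviForm P z (A, B)).re
    have hq : ∀ ε : ℝ, 0 ≤ 2 * ε * N + ε ^ 2 * K := by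
      intro ε
      have := hpsh z (v + (ε : ℂ) • (A, B))
      rw [hexp ε] at this
      have h4 : (2 * (ε : ℂ) * (N : ℝ) + (ε : ℂ) ^ 2 * leviForm P z (A, B)).re
          = 2 * ε * N + ε ^ 2 * K := by
        rw [show (2 * (ε : ℂ) * (N : ℝ)) = ((2 * ε * N : ℝ) : ℂ) by push_cast; ring,
          show (ε : ℂ) ^ 2 = ((ε ^ 2 : ℝ) : ℂ) by push_cast; ring, Complex.add_re,
          Complex.re_ofReal_mul, Complex.ofReal_re]
      rwa [h4] at this
    by_contra hne
    have hpos : 0 < N := lt_of_le_of_ne hN0 (Ne.symm hne)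
    have hK : 0 ≤ K := hpsh z (A, B)
    have h5 := hq (-(N / (K + 1)))
    have h6 : 2 * (-(N / (K + 1))) * N + (-(N / (K + 1))) ^ 2 * K
        = -(N / (K + 1)) ^ 2 * (K + 2) := by
      field_simp; ring
    rw [h6] at h5
    have : 0 < (N / (K + 1)) ^ 2 * (K + 2) := by positivity
    linarith
  have hA0 : A = 0 := by
    rw [← Complex.normSq_eq_zero]
    linarith [Complex.normSq_nonneg A, Complex.normSq_nonneg B]
  have hB0 : B = 0 := by
    rw [← Complex.normSq_eq_zero]
    linarith [Complex.normSq_nonneg A, Complex.normSq_nonneg B]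
  rcases he with rfl | rfl
  · exact hA ▸ hA0
  · exact hB ▸ hB0

/-! ### Cauchy integrals with parameters -/

lemma continuous_circle_param {X : Type*} [TopologicalSpace X] {G : X × ℂ → ℂ} (hG : Continuous G)
    (N : ℕ) : Continuous fun p : X × ℝ =>
      deriv (circleMap 0 1) p.2 • (((circleMap 0 1 p.2) ^ N)⁻¹ * G (p.1, circleMap 0 1 p.2)) := by
  have hc : Continuous fun p : X × ℝ => circleMap 0 1 p.2 :=
    (continuous_circleMap 0 1).comp continuous_snd
  simp only [deriv_circleMap]
  refine (hc.mul continuous_const).smul (((hc.pow N).inv₀ fun p => ?_).mul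
    (hG.comp (continuous_fst.prodMk hc)))
  exact pow_ne_zero _ (circleMap_ne_center one_ne_zero)

lemma continuous_circleIntegral_param {X : Type*} [TopologicalSpace X] [FirstCountableTopology X]
    [LocallyCompactSpace X] {G : X × ℂ → ℂ} (hG : Continuous G) (N : ℕ) :
    Continuous fun x => ∮ s in C(0, 1), (s ^ N)⁻¹ * G (x, s) :=
  intervalIntegral.continuous_parametric_intervalIntegral_of_continuous'
    (f := fun x θ => deriv (circleMap 0 1) θ • (((circleMap 0 1 θ) ^ N)⁻¹ * G (x, circleMap 0 1 θ)))
    (continuous_circle_param hG N) _ _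

lemma deriv_eq_circleIntegral {f : ℂ → ℂ} (hf : Differentiable ℂ f) :
    deriv f 0 = (2 * Real.pi * I)⁻¹ * ∮ s in C(0, 1), (s ^ 2)⁻¹ * f s := by
  have := (hf.differentiableOn (s := closure (ball 0 1))).diffContOnCl.deriv_eq_smul_circleIntegral
    (c := 0) (R := 1) one_pos
  have h2 : (∮ s in C(0, 1), (s ^ 2)⁻¹ * f s) = (2 * Real.pi * I) • deriv f 0 := by
    rw [← this]
    refine circleIntegral.integral_congr zero_le_one fun s _ => ?_
    simp
  rw [h2, smul_eq_mul, inv_mul_cancel_left₀ Complex.two_pi_I_ne_zero]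

lemma hasDerivAt_line {H : ℂ × ℂ → ℂ} (hH : Differentiable ℂ H) (z e : ℂ × ℂ) (t : ℂ) :
    HasDerivAt (fun t : ℂ => H (z + t • e)) (fderiv ℂ H (z + t • e) e) t := by
  have h1 : HasDerivAt (fun t : ℂ => z + t • e) e t := by
    simpa using ((hasDerivAt_id t).smul_const e).const_add z
  exact (hH _).hasFDerivAt.comp_hasDerivAt t h1

/-- An entire function on `ℂ²` is `C¹`: its partial derivatives are Cauchy integrals depending
continuously on the base point. -/
lemma contDiff_one_of_entire {H : ℂ × ℂ → ℂ} (hH : Differentiable ℂ H) : ContDiff ℂ 1 H := by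
  rw [contDiff_one_iff_fderiv]
  refine ⟨hH, ?_⟩
  have hpart : ∀ e : ℂ × ℂ, Continuous fun z => fderiv ℂ H z e := by
    intro e
    have h1 : ∀ z, fderiv ℂ H z e
        = (2 * Real.pi * I)⁻¹ * ∮ s in C(0, 1), (s ^ 2)⁻¹ * H (z + s • e) := by
      intro z
      have h2 := hasDerivAt_line hH z e
      rw [← deriv_eq_circleIntegral fun t => (h2 t).differentiableAt, (h2 0).deriv]
      simp
    simp_rw [h1]
    refine continuous_const.mul
      (continuous_circleIntegral_param (G := fun p : (ℂ × ℂ) × ℂ => H (p.1 + p.2 • e)) ?_ 2)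
    exact hH.continuous.comp (by fun_prop)
  have h3 : fderiv ℂ H = fun z =>
      (ContinuousLinearMap.fst ℂ ℂ ℂ).smulRight (fderiv ℂ H z (1, 0))
      + (ContinuousLinearMap.snd ℂ ℂ ℂ).smulRight (fderiv ℂ H z (0, 1)) := by
    funext z
    refine ContinuousLinearMap.ext fun v => ?_
    have hv : v = v.1 • ((1 : ℂ), (0 : ℂ)) + v.2 • ((0 : ℂ), (1 : ℂ)) := by
      apply Prod.ext <;> simp
    conv_lhs => rw [hv]
    simp only [map_add, map_smul]
    simp
  rw [h3]
  exact ((ContinuousLinearMap.smulRightL ℂ (ℂ × ℂ) ℂ (.fst ℂ ℂ ℂ)).continuous.comp (hpart _)).add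
    ((ContinuousLinearMap.smulRightL ℂ (ℂ × ℂ) ℂ (.snd ℂ ℂ ℂ)).continuous.comp (hpart _))

/-- Differentiation of a Cauchy-type integral in a holomorphic parameter. -/
lemma hasDerivAt_circleIntegral_param {G : ℂ × ℂ → ℂ} (hG : Differentiable ℂ G) (N : ℕ) (w : ℂ) :
    HasDerivAt (fun w => ∮ s in C(0, 1), (s ^ N)⁻¹ * G (w, s))
      (∮ s in C(0, 1), (s ^ N)⁻¹ * fderiv ℂ G (w, s) (1, 0)) w := by
  have hC : Continuous fun p => fderiv ℂ G p (1, 0) :=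
    ((contDiff_one_of_entire hG).continuous_fderiv (by norm_num)).clm_apply continuous_const
  have c1 := continuous_circle_param hG.continuous N
  have c2 := continuous_circle_param hC N
  obtain ⟨K, hK⟩ := ((isCompact_closedBall w 1).prod (isCompact_uIcc (a := (0 : ℝ))
    (b := 2 * Real.pi))).exists_bound_of_continuousOn c2.continuousOn
  refine (intervalIntegral.hasDerivAt_integral_of_dominated_loc_of_deriv_le
    (F := fun w θ => deriv (circleMap 0 1) θ • (((circleMap 0 1 θ) ^ N)⁻¹ * G (w, circleMap 0 1 θ)))
    (F' := fun w θ => deriv (circleMap 0 1) θ • (((circleMap 0 1 θ) ^ N)⁻¹ *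
      fderiv ℂ G (w, circleMap 0 1 θ) (1, 0))) (bound := fun _ => K)
    (closedBall_mem_nhds w one_pos) ?_ ?_ ?_ ?_ ?_ ?_).2
  · exact Filter.Eventually.of_forall fun x =>
      (c1.comp (continuous_const.prodMk continuous_id : Continuous fun θ : ℝ => (x, θ))).aestronglyMeasurable
  · exact (c1.comp (continuous_const.prodMk continuous_id :
      Continuous fun θ : ℝ => (w, θ))).intervalIntegrable _ _
  · exact (c2.comp (continuous_const.prodMk continuous_id :
      Continuous fun θ : ℝ => (w, θ))).aestronglyMeasurable
  · exact Filter.Eventually.of_forall fun θ hθ x hx => hK (x, θ) ⟨hx, uIoc_subset_uIcc hθ⟩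
  · exact intervalIntegrable_const
  · refine Filter.Eventually.of_forall fun θ _ x _ => ?_
    have h1 : HasDerivAt (fun x : ℂ => (x, circleMap 0 1 θ)) (1, 0) x :=
      (hasDerivAt_id x).prodMk (hasDerivAt_const x _)
    have h2 : HasDerivAt (fun x : ℂ => G (x, circleMap 0 1 θ)) _ x :=
      (hG _).hasFDerivAt.comp_hasDerivAt x h1
    exact (h2.const_mul (((circleMap 0 1 θ) ^ N)⁻¹)).const_smul (deriv (circleMap 0 1) θ)

/-! ### Level curves and the kernel of the Levi form -/

lemma fderiv_apply_pair (G : ℂ × ℂ → ℂ) (z v : ℂ × ℂ) :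
    fderiv ℂ G z v = v.1 * fderiv ℂ G z (1, 0) + v.2 * fderiv ℂ G z (0, 1) := by
  have hv : v = v.1 • ((1 : ℂ), (0 : ℂ)) + v.2 • ((0 : ℂ), (1 : ℂ)) := by
    apply Prod.ext <;> simp
  conv_lhs => rw [hv]
  simp only [map_add, map_smul, smul_eq_mul]

/-- Through a noncritical point of an entire function passes an injective holomorphic disc inside
the level set (inverse function theorem applied to `(G, ℓ)` with a complementary linear form
`ℓ`). -/
lemma exists_level_disc {G : ℂ × ℂ → ℂ} (hG : Differentiable ℂ G) (p : ℂ × ℂ)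
    (hp : fderiv ℂ G p ≠ 0) :
    ∃ φ : ℂ → ℂ × ℂ, DifferentiableOn ℂ φ (ball 0 1) ∧ InjOn φ (ball 0 1) ∧
      φ '' ball 0 1 ⊆ G ⁻¹' {G p} ∧ φ 0 = p ∧ fderiv ℂ G p (deriv φ 0) = 0 ∧ deriv φ 0 ≠ 0 := by
  set α := fderiv ℂ G p (1, 0) with hα
  set β := fderiv ℂ G p (0, 1) with hβ
  have hN : α * conj α + β * conj β ≠ 0 := by
    intro h
    apply hp
    rw [Complex.mul_conj, Complex.mul_conj, ← Complex.ofReal_add, Complex.ofReal_eq_zero] at h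
    have h1 : α = 0 := by
      rw [← Complex.normSq_eq_zero]
      linarith [Complex.normSq_nonneg α, Complex.normSq_nonneg β]
    have h2 : β = 0 := by
      rw [← Complex.normSq_eq_zero]
      linarith [Complex.normSq_nonneg α, Complex.normSq_nonneg β]
    refine ContinuousLinearMap.ext fun v => ?_
    rw [fderiv_apply_pair, ← hα, ← hβ, h1, h2]
    simp
  set ℓ : ℂ × ℂ →L[ℂ] ℂ := (-conj β) • ContinuousLinearMap.fst ℂ ℂ ℂ
    + (conj α) • ContinuousLinearMap.snd ℂ ℂ ℂ with hℓ
  have hℓv : ∀ v : ℂ × ℂ, ℓ v = -conj β * v.1 + conj α * v.2 := fun v => by simp [hℓ]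
  set T : ℂ × ℂ →L[ℂ] ℂ × ℂ := (fderiv ℂ G p).prod ℓ with hT
  have hTinj : Function.Injective (T : ℂ × ℂ →ₗ[ℂ] ℂ × ℂ) := by
    rw [injective_iff_map_eq_zero]
    intro v hv
    have h1 : fderiv ℂ G p v = 0 := congrArg Prod.fst hv
    have h2 : ℓ v = 0 := congrArg Prod.snd hv
    rw [fderiv_apply_pair, ← hα, ← hβ] at h1
    rw [hℓv] at h2
    have h3 : v.1 * (α * conj α + β * conj β) = 0 := by
      linear_combination conj α * h1 - β * h2
    have h4 : v.2 * (α * conj α + β * conj β) = 0 := by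
      linear_combination conj β * h1 + α * h2
    exact Prod.ext ((mul_eq_zero.1 h3).resolve_right hN) ((mul_eq_zero.1 h4).resolve_right hN)
  set T' : (ℂ × ℂ) ≃L[ℂ] (ℂ × ℂ) :=
    (LinearEquiv.ofInjectiveEndo (T : ℂ × ℂ →ₗ[ℂ] ℂ × ℂ) hTinj).toContinuousLinearEquiv with hT'
  set Ψ : ℂ × ℂ → ℂ × ℂ := fun z => (G z, ℓ z) with hΨ
  have hΨc : ContDiffAt ℂ 1 Ψ p :=
    ((contDiff_one_of_entire hG).prodMk ℓ.contDiff).contDiffAt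
  have hΨd : HasFDerivAt Ψ (T' : ℂ × ℂ →L[ℂ] ℂ × ℂ) p := by
    have h1 : HasFDerivAt Ψ T p := (hG p).hasFDerivAt.prodMk ℓ.hasFDerivAt
    have h2 : (T' : ℂ × ℂ →L[ℂ] ℂ × ℂ) = T := by
      refine ContinuousLinearMap.ext fun v => ?_
      rfl
    rwa [h2]
  have hstr : HasStrictFDerivAt Ψ (T' : ℂ × ℂ →L[ℂ] ℂ × ℂ) p :=
    hΨc.hasStrictFDerivAt' hΨd one_ne_zero
  set g := hstr.localInverse Ψ T' p with hg
  have hgc : ContDiffAt ℂ 1 g (Ψ p) := hΨc.to_localInverse hΨd one_ne_zero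
  have hgd : ∀ᶠ y in nhds (Ψ p), DifferentiableAt ℂ g y :=
    (hgc.eventually (by simp)).mono fun y hy => hy.differentiableAt one_ne_zero
  have hgr : ∀ᶠ y in nhds (Ψ p), Ψ (g y) = y := hstr.eventually_right_inverse
  have hgp : g (Ψ p) = p := hstr.localInverse_apply_image
  obtain ⟨δ, hδ, hball⟩ := Metric.eventually_nhds_iff_ball.1 (hgd.and hgr)
  set r : ℂ := ((δ / 2 : ℝ) : ℂ) with hr
  have hr0 : r ≠ 0 := by
    rw [hr, Complex.ofReal_ne_zero]; positivity
  set c : ℂ → ℂ × ℂ := fun w => (G p, ℓ p + r * w) with hc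
  have hcm : ∀ w ∈ ball (0 : ℂ) 1, c w ∈ ball (Ψ p) δ := by
    intro w hw
    rw [mem_ball_zero_iff] at hw
    have : dist (c w) (Ψ p) = ‖r * w‖ := by
      rw [hc, hΨ, Prod.dist_eq]
      simp only [dist_self, dist_self_add_left]
      exact max_eq_right (norm_nonneg _)
    rw [mem_ball, this, norm_mul, hr, Complex.norm_real, Real.norm_of_nonneg (by positivity)]
    nlinarith [norm_nonneg w]
  have hcd : ∀ w, HasDerivAt c (0, r) w := by
    intro w
    refine (hasDerivAt_const w _).prodMk ?_
    simpa using ((hasDerivAt_id w).const_mul r).const_add (ℓ p)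
  have hΨg : ∀ w ∈ ball (0 : ℂ) 1, Ψ (g (c w)) = c w := fun w hw => (hball _ (hcm w hw)).2
  have hdiff : ∀ w ∈ ball (0 : ℂ) 1, DifferentiableAt ℂ (fun w => g (c w)) w := fun w hw =>
    ((hball _ (hcm w hw)).1).comp w (hcd w).differentiableAt
  have h0 : (0 : ℂ) ∈ ball (0 : ℂ) 1 := mem_ball_self one_pos
  have hc0 : c 0 = Ψ p := by simp [hc, hΨ]
  refine ⟨fun w => g (c w), fun w hw => (hdiff w hw).differentiableWithinAt, ?_, ?_, ?_, ?_⟩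
  · intro x hx y hy hxy
    have h1 : c x = c y := by
      rw [← hΨg x hx, ← hΨg y hy]; exact congrArg Ψ hxy
    have h2 : ℓ p + r * x = ℓ p + r * y := congrArg Prod.snd h1
    exact mul_left_cancel₀ hr0 (add_left_cancel h2)
  · rintro _ ⟨w, hw, rfl⟩
    exact congrArg Prod.fst (hΨg w hw)
  · simp only [hc0, hgp]
  · have hφ0 : g (c 0) = p := by rw [hc0, hgp]
    have h1 : HasDerivAt (fun w => g (c w)) (deriv (fun w => g (c w)) 0) 0 :=
      (hdiff 0 h0).hasDerivAt
    have h2 : HasDerivAt (fun w => Ψ (g (c w))) (T (deriv (fun w => g (c w)) 0)) 0 := by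
      have hp' : HasFDerivAt Ψ T (g (c 0)) := by
        rw [hφ0]
        exact (hG p).hasFDerivAt.prodMk ℓ.hasFDerivAt
      exact hp'.comp_hasDerivAt 0 h1
    have h3 : (fun w => Ψ (g (c w))) =ᶠ[nhds 0] c := by
      filter_upwards [isOpen_ball.mem_nhds h0] with w hw using hΨg w hw
    have h4 : T (deriv (fun w => g (c w)) 0) = (0, r) :=
      h2.unique ((hcd 0).congr_of_eventuallyEq h3)
    refine ⟨congrArg Prod.fst h4, fun h5 => hr0 ?_⟩
    rw [h5, map_zero] at h4
    exact (congrArg Prod.snd h4).symm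

/-- If `P` is psh and harmonic along the level curves of `G`, then the vector field
`(-P_{2k̄}, P_{1k̄})` annihilates `G`. -/
lemma level_pde {P : ℂ × ℂ → ℝ} (hP : ContDiff ℝ 2 fun w => (P w : ℂ)) (hpsh : IsPsh P)
    {G : ℂ × ℂ → ℂ} (hG : Differentiable ℂ G) (hB : ∀ c : ℂ, HarmonicAlong P (G ⁻¹' {c}))
    (e : ℂ × ℂ) (he : e = (1, 0) ∨ e = (0, 1)) (z : ℂ × ℂ) :
    fderiv ℂ G z (-mixedDeriv P (0, 1) e z, mixedDeriv P (1, 0) e z) = 0 := by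
  by_cases hz : fderiv ℂ G z = 0
  · rw [hz]; rfl
  obtain ⟨φ, hφd, hφi, hφl, hφ0, hφt, hφn⟩ := exists_level_disc hG z hz
  have h0 : (0 : ℂ) ∈ ball (0 : ℂ) 1 := mem_ball_self one_pos
  have hlap := hB (G z) φ hφd hφi hφl 0 h0
  rw [lap_comp hP hφd h0, hφ0] at hlap
  have hk := levi_kernel hP hpsh ((mul_eq_zero.1 hlap).resolve_left (by norm_num)) e he
  rw [fderiv_apply_pair] at hφt ⊢
  simp only
  set u := deriv φ 0
  by_cases hu : u.1 = 0
  · have hu2 : u.2 ≠ 0 := fun h => hφn (Prod.ext hu h)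
    apply mul_left_cancel₀ hu2
    linear_combination mixedDeriv P (1, 0) e z * hφt - hk * fderiv ℂ G z (1, 0)
  · apply mul_left_cancel₀ hu
    linear_combination -mixedDeriv P (0, 1) e z * hφt + hk * fderiv ℂ G z (0, 1)

/-! ### Weighted homogeneous components of an entire function -/

/-- The complex weighted dilation `(s^a z₁, s^b z₂)`. -/
def cdil (a b : ℕ) (s : ℂ) (z : ℂ × ℂ) : ℂ × ℂ := (s ^ a * z.1, s ^ b * z.2)

/-- The weighted homogeneous component of degree `n` of `H`: the `n`-th Taylor coefficient at `0`
of `s ↦ H (s^a z₁, s^b z₂)`, written as a Cauchy integral. -/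
def hcomp (H : ℂ × ℂ → ℂ) (a b n : ℕ) (z : ℂ × ℂ) : ℂ :=
  (2 * Real.pi * I)⁻¹ * ∮ s in C(0, 1), (s ^ (n + 1))⁻¹ * H (cdil a b s z)

lemma differentiable_cdil_left (a b : ℕ) (z : ℂ × ℂ) : Differentiable ℂ fun s => cdil a b s z := by
  unfold cdil; fun_prop

lemma differentiable_cdil (a b : ℕ) (s : ℂ) : Differentiable ℂ (cdil a b s) := by
  unfold cdil; fun_prop

lemma differentiable_cdil_comp {E : Type*} [NormedAddCommGroup E] [NormedSpace ℂ E] (a b : ℕ)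
    {σ : E → ℂ} {γ : E → ℂ × ℂ} (hσ : Differentiable ℂ σ) (hγ : Differentiable ℂ γ) :
    Differentiable ℂ fun p => cdil a b (σ p) (γ p) := by
  unfold cdil; fun_prop

lemma continuous_cdil_swap (a b : ℕ) : Continuous fun p : (ℂ × ℂ) × ℂ => cdil a b p.2 p.1 := by
  unfold cdil; fun_prop

lemma cdil_mul (a b : ℕ) (s t : ℂ) (z : ℂ × ℂ) : cdil a b s (cdil a b t z) = cdil a b (t * s) z := by
  unfold cdil
  ext <;> simp <;> ring

lemma coeff_eq_iteratedDeriv {f : ℂ → ℂ} (hf : Differentiable ℂ f) (n : ℕ) :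
    (2 * Real.pi * I)⁻¹ * (∮ s in C(0, 1), (s ^ (n + 1))⁻¹ * f s)
      = (n.factorial : ℂ)⁻¹ * iteratedDeriv n f 0 := by
  have h1 := DiffContOnCl.circleIntegral_one_div_sub_center_pow_smul (c := (0 : ℂ)) (R := 1)
    one_pos n hf.diffContOnCl
  simp only [sub_zero, one_div, smul_eq_mul] at h1
  rw [h1]
  have h2 : (2 * Real.pi * I : ℂ) ≠ 0 := by simp [Real.pi_ne_zero]
  have h3 : (n.factorial : ℂ) ≠ 0 := by exact_mod_cast n.factorial_ne_zero
  field_simp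

lemma hcomp_eq_iteratedDeriv {H : ℂ × ℂ → ℂ} (hH : Differentiable ℂ H) (a b n : ℕ) (z : ℂ × ℂ) :
    hcomp H a b n z = (n.factorial : ℂ)⁻¹ * iteratedDeriv n (fun s => H (cdil a b s z)) 0 :=
  coeff_eq_iteratedDeriv (hH.comp (differentiable_cdil_left a b z)) n

lemma hcomp_cdil {H : ℂ × ℂ → ℂ} (hH : Differentiable ℂ H) (a b n : ℕ) (t : ℂ) (z : ℂ × ℂ) :
    hcomp H a b n (cdil a b t z) = t ^ n * hcomp H a b n z := by
  rw [hcomp_eq_iteratedDeriv hH, hcomp_eq_iteratedDeriv hH]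
  simp_rw [cdil_mul]
  have h := iteratedDeriv_comp_const_mul (n := n) (f := fun s => H (cdil a b s z))
    (hH.comp (differentiable_cdil_left a b z)).contDiff t
  have h2 := congrFun h 0
  simp only [mul_zero] at h2
  rw [h2]
  ring

/-- Components of positive degree cannot all vanish unless the function is constant. -/
lemma const_of_hcomp_eq_zero {H : ℂ × ℂ → ℂ} (hH : Differentiable ℂ H) {a b : ℕ} (ha : 0 < a)
    (hb : 0 < b) (h : ∀ n, 1 ≤ n → ∀ z, hcomp H a b n z = 0) (z : ℂ × ℂ) : H z = H 0 := by
  have hd : Differentiable ℂ fun s => H (cdil a b s z) := hH.comp (differentiable_cdil_left a b z)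
  have hs := Complex.hasSum_taylorSeries_of_entire hd 0 1
  have hs0 : HasSum (fun n : ℕ ↦ (n.factorial : ℂ)⁻¹ • ((1 : ℂ) - 0) ^ n •
      iteratedDeriv n (fun s => H (cdil a b s z)) 0) (H (cdil a b 0 z)) := by
    convert hasSum_single 0 ?_ using 1
    · simp
    · intro n hn
      have := h n (Nat.one_le_iff_ne_zero.2 hn) z
      rw [hcomp_eq_iteratedDeriv hH] at this
      simpa using this
  have := hs.unique hs0
  simpa [cdil, ha.ne', hb.ne', ← Prod.zero_eq_mk] using this

/-- An entire function of polynomial growth is a polynomial (Cauchy estimates). -/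
lemma exists_polynomial_of_growth {f : ℂ → ℂ} (hf : Differentiable ℂ f) (n : ℕ) (C : ℝ)
    (hC : ∀ w, ‖f w‖ ≤ C * (max 1 ‖w‖) ^ n) :
    ∃ p : Polynomial ℂ, p.degree < (n + 1 : ℕ) ∧ ∀ w, f w = p.eval w := by
  have hz : ∀ k, n < k → iteratedDeriv k f 0 = 0 := by
    intro k hk
    have hbd : ∀ R : ℝ, 1 ≤ R → ‖iteratedDeriv k f 0‖ ≤ k.factorial * C * R⁻¹ := by
      intro R hR
      have hR0 : 0 < R := by linarith
      have hCR : ∀ z ∈ sphere (0 : ℂ) R, ‖f z‖ ≤ C * R ^ n := by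
        intro z hz
        have := hC z
        rwa [mem_sphere_zero_iff_norm.1 hz, max_eq_right hR] at this
      have h1 := Complex.norm_iteratedDeriv_le_of_forall_mem_sphere_norm_le k hR0
        hf.diffContOnCl hCR
      have hC0 : 0 ≤ C := by
        have := (norm_nonneg _).trans (hC 0)
        simpa using this
      refine h1.trans ?_
      rw [mul_assoc, mul_div_assoc]
      refine mul_le_mul_of_nonneg_left ?_ (Nat.cast_nonneg _)
      rw [mul_div_assoc]
      refine mul_le_mul_of_nonneg_left ?_ hC0
      rw [div_le_iff₀ (by positivity), inv_mul_eq_div, le_div_iff₀ hR0, ← pow_succ]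
      exact pow_le_pow_right₀ hR hk
    have ht : Filter.Tendsto (fun R : ℝ => k.factorial * C * R⁻¹) Filter.atTop (nhds 0) := by
      simpa using tendsto_inv_atTop_zero.const_mul ((k.factorial : ℝ) * C)
    have := ge_of_tendsto ht (Filter.eventually_atTop.2 ⟨1, hbd⟩)
    exact norm_le_zero_iff.1 this
  refine ⟨∑ k ∈ Finset.range (n + 1), Polynomial.C ((k.factorial : ℂ)⁻¹ * iteratedDeriv k f 0)
    * Polynomial.X ^ k, ?_, fun w => ?_⟩
  · refine (Polynomial.degree_sum_le _ _).trans_lt ?_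
    rw [Finset.sup_lt_iff (by exact WithBot.bot_lt_coe _)]
    intro k hk
    refine (Polynomial.degree_C_mul_X_pow_le _ _).trans_lt ?_
    exact_mod_cast Finset.mem_range.1 hk
  · have hs := Complex.hasSum_taylorSeries_of_entire hf 0 w
    have hs' : HasSum (fun k : ℕ ↦ (k.factorial : ℂ)⁻¹ • (w - 0) ^ k • iteratedDeriv k f 0)
        (∑ k ∈ Finset.range (n + 1), (k.factorial : ℂ)⁻¹ • (w - 0) ^ k • iteratedDeriv k f 0) := by
      refine hasSum_sum_of_ne_finset_zero fun k hk => ?_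
      rw [hz k (by simpa using hk)]; simp
    rw [hs.unique hs', Polynomial.eval_finsetSum]
    refine Finset.sum_congr rfl fun k _ => ?_
    simp
    ring

/-- A function of two variables that is polynomial of bounded degree in each variable separately
is a polynomial, by Lagrange interpolation at the nodes `0, …, n`. -/
lemma isPolyMap2_of_separately {F : ℂ × ℂ → ℂ} (n : ℕ)
    (h1 : ∀ y, ∃ p : Polynomial ℂ, p.degree < (n + 1 : ℕ) ∧ ∀ x, F (x, y) = p.eval x)
    (h2 : ∀ x, ∃ p : Polynomial ℂ, p.degree < (n + 1 : ℕ) ∧ ∀ y, F (x, y) = p.eval y) :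
    IsPolyMap2 F := by
  set S := Finset.range (n + 1) with hS
  set v : ℕ → ℂ := fun i => (i : ℂ) with hv
  have hinj : Set.InjOn v S := fun i _ j _ hij => Nat.cast_injective (R := ℂ) hij
  have hx : ∀ x y, F (x, y) = ∑ i ∈ S, F (v i, y) * (Lagrange.basis S v i).eval x := by
    intro x y
    obtain ⟨p, hp, hpe⟩ := h1 y
    have := Lagrange.eq_interpolate hinj (f := p) (by simpa [hS] using hp)
    rw [hpe]
    conv_lhs => rw [this]
    rw [Lagrange.interpolate_apply, Polynomial.eval_finsetSum]
    simp [hpe]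
  have hy : ∀ x y, F (x, y) = ∑ i ∈ S, F (x, v i) * (Lagrange.basis S v i).eval y := by
    intro x y
    obtain ⟨p, hp, hpe⟩ := h2 x
    have := Lagrange.eq_interpolate hinj (f := p) (by simpa [hS] using hp)
    rw [hpe]
    conv_lhs => rw [this]
    rw [Lagrange.interpolate_apply, Polynomial.eval_finsetSum]
    simp [hpe]
  refine ⟨∑ i ∈ S, ∑ k ∈ S, MvPolynomial.C (F (v i, v k)) *
    Polynomial.aeval (MvPolynomial.X 1) (Lagrange.basis S v k) *
    Polynomial.aeval (MvPolynomial.X 0) (Lagrange.basis S v i), fun z => ?_⟩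
  have hev : ∀ (i : Fin 2) (p : Polynomial ℂ), MvPolynomial.eval ![z.1, z.2]
      (Polynomial.aeval (MvPolynomial.X i : MvPolynomial (Fin 2) ℂ) p) = p.eval (![z.1, z.2] i) := by
    intro i p
    induction p using Polynomial.induction_on' with
    | add p q hp hq => simp [hp, hq]
    | monomial k c => simp [Polynomial.aeval_monomial, MvPolynomial.algebraMap_eq]
  simp only [map_sum, map_mul, MvPolynomial.eval_C, hev]
  rw [← Prod.mk.eta (p := z), hx]
  refine Finset.sum_congr rfl fun i _ => ?_
  rw [hy (v i) z.2, Finset.sum_mul]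
  simp

lemma continuous_hcomp {H : ℂ × ℂ → ℂ} (hH : Differentiable ℂ H) (a b n : ℕ) :
    Continuous (hcomp H a b n) :=
  continuous_const.mul (continuous_circleIntegral_param
    (G := fun p : (ℂ × ℂ) × ℂ => H (cdil a b p.2 p.1))
    (hH.continuous.comp (continuous_cdil_swap a b)) (n + 1))

lemma hasDerivAt_hcomp_line {H : ℂ × ℂ → ℂ} (hH : Differentiable ℂ H) (a b n : ℕ) (z v : ℂ × ℂ)
    (w : ℂ) : HasDerivAt (fun ε : ℂ => hcomp H a b n (z + ε • v))
      ((2 * Real.pi * I)⁻¹ * ∮ s in C(0, 1), (s ^ (n + 1))⁻¹ *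
        fderiv ℂ (fun p : ℂ × ℂ => H (cdil a b p.2 (z + p.1 • v))) (w, s) (1, 0)) w := by
  refine (hasDerivAt_circleIntegral_param (G := fun p : ℂ × ℂ => H (cdil a b p.2 (z + p.1 • v)))
    ?_ (n + 1) w).const_mul _
  exact hH.comp (differentiable_cdil_comp a b differentiable_snd (by fun_prop))

lemma isPolyMap2_hcomp {H : ℂ × ℂ → ℂ} (hH : Differentiable ℂ H) {a b : ℕ} (ha : 0 < a)
    (hb : 0 < b) (n : ℕ) : IsPolyMap2 (hcomp H a b n) := by
  obtain ⟨K, hK⟩ := ((isCompact_closedBall (0 : ℂ) 1).prod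
    (isCompact_closedBall (0 : ℂ) 1)).exists_bound_of_continuousOn
    (continuous_hcomp hH a b n).continuousOn
  have hK0 : 0 ≤ K := (norm_nonneg _).trans (hK (0, 0) ⟨by simp, by simp⟩)
  -- homogeneity transports the bound on the unit polydisc to a polynomial growth bound
  have hbd : ∀ z : ℂ × ℂ, ‖hcomp H a b n z‖ ≤ K * (max 1 ‖z.1‖ * max 1 ‖z.2‖) ^ n := by
    intro z
    set R : ℝ := max 1 ‖z.1‖ * max 1 ‖z.2‖ with hR
    have h1 : 1 ≤ max 1 ‖z.1‖ := le_max_left _ _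
    have h2 : 1 ≤ max 1 ‖z.2‖ := le_max_left _ _
    have hR1 : 1 ≤ R := one_le_mul_of_one_le_of_one_le h1 h2
    have hR0 : 0 < R := by linarith
    have hRc : (R : ℂ) ≠ 0 := by exact_mod_cast hR0.ne'
    have hz1 : ‖z.1‖ ≤ R := (le_max_right 1 _).trans (le_mul_of_one_le_right (by linarith) h2)
    have hz2 : ‖z.2‖ ≤ R := (le_max_right 1 _).trans (le_mul_of_one_le_left (by linarith) h1)
    have hmem : ∀ (k : ℕ) (u : ℂ), 0 < k → ‖u‖ ≤ R → (R : ℂ)⁻¹ ^ k * u ∈ closedBall (0 : ℂ) 1 := by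
      intro k u hk hu
      rw [mem_closedBall_zero_iff, norm_mul, norm_pow, norm_inv, Complex.norm_real,
        Real.norm_of_nonneg hR0.le, inv_pow, inv_mul_le_iff₀ (by positivity), mul_one]
      exact hu.trans (le_self_pow₀ hR1 hk.ne')
    have h3 : z = cdil a b (R : ℂ) (cdil a b (R : ℂ)⁻¹ z) := by
      rw [cdil_mul, inv_mul_cancel₀ hRc]; simp [cdil]
    have h4 := hK (cdil a b (R : ℂ)⁻¹ z) ⟨hmem a _ ha hz1, hmem b _ hb hz2⟩
    rw [h3, hcomp_cdil hH, norm_mul, norm_pow, Complex.norm_real, Real.norm_of_nonneg hR0.le, mul_comm]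
    exact mul_le_mul_of_nonneg_right h4 (by positivity)
  refine isPolyMap2_of_separately n (fun y => ?_) (fun x => ?_)
  · refine exists_polynomial_of_growth ?_ n (K * (max 1 ‖y‖) ^ n) fun w => ?_
    · intro w
      have := (hasDerivAt_hcomp_line hH a b n (0, y) (1, 0) w).differentiableAt
      simpa using this
    · refine (hbd (w, y)).trans (le_of_eq ?_)
      rw [mul_pow]; ring
  · refine exists_polynomial_of_growth ?_ n (K * (max 1 ‖x‖) ^ n) fun w => ?_
    · intro w
      have := (hasDerivAt_hcomp_line hH a b n (x, 0) (0, 1) w).differentiableAt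
      simpa using this
    · refine (hbd (x, w)).trans (le_of_eq ?_)
      rw [mul_pow]; ring

/-- If a vector `v` at `z` is annihilated by the differential of `H ∘ δ_s` for all real `s > 0`,
it is annihilated by the differentials of all homogeneous components of `H`. -/
lemma hasDerivAt_hcomp_zero {H : ℂ × ℂ → ℂ} (hH : Differentiable ℂ H) (a b n : ℕ) (z v : ℂ × ℂ)
    (h : ∀ s : ℝ, 0 < s → fderiv ℂ (fun z => H (cdil a b s z)) z v = 0) :
    HasDerivAt (fun ε : ℂ => hcomp H a b n (z + ε • v)) 0 0 := by
  set g : ℂ × ℂ → ℂ := fun p => H (cdil a b p.2 (z + p.1 • v)) with hg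
  have hgd : Differentiable ℂ g :=
    hH.comp (differentiable_cdil_comp a b differentiable_snd (by fun_prop))
  have hline : ∀ s : ℂ, HasDerivAt (fun ε : ℂ => H (cdil a b s (z + ε • v)))
      (fderiv ℂ (fun z => H (cdil a b s z)) z v) 0 := by
    intro s
    have hl := hasDerivAt_line (H := fun z => H (cdil a b s z))
      (hH.comp (differentiable_cdil a b s)) z v 0
    simpa using hl
  have hd : ∀ s : ℂ, fderiv ℂ g (0, s) (1, 0) = fderiv ℂ (fun z => H (cdil a b s z)) z v := by
    intro s
    have h1 : HasDerivAt (fun x : ℂ => (x, s)) (1, 0) (0 : ℂ) :=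
      (hasDerivAt_id (0 : ℂ)).prodMk (hasDerivAt_const (0 : ℂ) _)
    have h0 : HasFDerivAt g (fderiv ℂ g (0, s)) ((fun x : ℂ => (x, s)) 0) := (hgd _).hasFDerivAt
    have h2 : HasDerivAt (g ∘ fun x : ℂ => (x, s)) (fderiv ℂ g (0, s) (1, 0)) 0 :=
      HasFDerivAt.comp_hasDerivAt (l := g) 0 h0 h1
    exact h2.unique (hline s)
  -- `s ↦ d(H ∘ δ_s)(v)` is entire, hence vanishes identically once it does for `s > 0`
  have hent : Differentiable ℂ fun s : ℂ => fderiv ℂ (fun z => H (cdil a b s z)) z v := by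
    have h1 : ∀ s : ℂ, fderiv ℂ (fun z => H (cdil a b s z)) z v = (2 * Real.pi * I)⁻¹ *
        ∮ ε in C(0, 1), (ε ^ 2)⁻¹ * H (cdil a b s (z + ε • v)) := by
      intro s
      rw [← (hline s).deriv]
      exact deriv_eq_circleIntegral
        (hH.comp (differentiable_cdil_comp a b (differentiable_const s) (by fun_prop)))
    simp_rw [h1]
    intro s
    exact (hasDerivAt_circleIntegral_param (G := fun p : ℂ × ℂ => H (cdil a b p.1 (z + p.2 • v)))
      (hH.comp (differentiable_cdil_comp a b differentiable_fst (by fun_prop)))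
      2 s).differentiableAt.const_mul _
  have hzero : (fun s : ℂ => fderiv ℂ (fun z => H (cdil a b s z)) z v) = fun _ => 0 := by
    have hA : AnalyticOnNhd ℂ (fun s : ℂ => fderiv ℂ (fun z => H (cdil a b s z)) z v) univ :=
      fun s _ => hent.analyticAt s
    refine hA.eq_of_frequently_eq (z₀ := 1) analyticOnNhd_const ?_
    have ht : Filter.Tendsto (fun k : ℕ => ((1 + 1 / ((k : ℝ) + 1) : ℝ) : ℂ)) Filter.atTop
        (nhdsWithin 1 {1}ᶜ) := by
      refine tendsto_nhdsWithin_iff.2 ⟨?_, Filter.Eventually.of_forall fun k => ?_⟩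
      · have := (tendsto_one_div_add_atTop_nhds_zero_nat (𝕜 := ℝ)).const_add 1
        have h2 := (Complex.continuous_ofReal.tendsto _).comp this
        rw [add_zero, Complex.ofReal_one] at h2
        exact h2
      · have : (0 : ℝ) < 1 / ((k : ℝ) + 1) := by positivity
        intro hk
        have hk' : (1 + 1 / ((k : ℝ) + 1) : ℝ) = 1 := Complex.ofReal_eq_one.1 (mem_singleton_iff.1 hk)
        linarith
    refine ht.frequently (Filter.Frequently.of_forall fun k => ?_)
    exact h _ (by positivity)
  have := hasDerivAt_hcomp_line hH a b n z v 0
  rw [show (∮ s in C(0, 1), (s ^ (n + 1))⁻¹ * fderiv ℂ g (0, s) (1, 0)) = 0 from ?_, mul_zero] at this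
  · exact this
  · rw [circleIntegral.integral_congr zero_le_one (g := fun _ => 0)]
    · simp [circleIntegral]
    · intro s _
      have := congrFun hzero s
      simp only [hd]
      rw [this, mul_zero]

/-! ### Level sets of weighted homogeneous polynomials -/

/-- Evaluation of a polynomial in two variables at a point of `ℂ × ℂ`. -/
def ev (z : ℂ × ℂ) (Q : MvPolynomial (Fin 2) ℂ) : ℂ := MvPolynomial.eval ![z.1, z.2] Q

lemma hasDerivAt_ev {γ : ℂ → ℂ × ℂ} {γ' : ℂ × ℂ} {t : ℂ} (hγ : HasDerivAt γ γ' t)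
    (Q : MvPolynomial (Fin 2) ℂ) :
    HasDerivAt (fun s => ev (γ s) Q)
      (ev (γ t) (MvPolynomial.pderiv 0 Q) * γ'.1 + ev (γ t) (MvPolynomial.pderiv 1 Q) * γ'.2) t := by
  have h1 : HasDerivAt (fun s => (γ s).1) γ'.1 t := hγ.fst
  have h2 : HasDerivAt (fun s => (γ s).2) γ'.2 t := hγ.snd
  induction Q using MvPolynomial.induction_on with
  | C c =>
    simp only [ev, MvPolynomial.eval_C, MvPolynomial.pderiv_C, map_zero, zero_mul, add_zero]
    exact hasDerivAt_const _ _
  | add p q hp hq =>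
    simp only [ev, map_add] at hp hq ⊢
    refine (hp.add hq).congr_deriv ?_
    ring
  | mul_X p i hp =>
    simp only [ev] at hp ⊢
    fin_cases i
    · simp only [Fin.zero_eta, map_mul, MvPolynomial.eval_X, Derivation.leibniz, map_add,
        MvPolynomial.pderiv_X_self, smul_eq_mul, Matrix.cons_val_zero, map_one,
        MvPolynomial.pderiv_X_of_ne (show (0 : Fin 2) ≠ 1 by decide), map_zero]
      refine (hp.mul h1).congr_deriv ?_
      ring
    · simp only [Fin.mk_one, map_mul, MvPolynomial.eval_X, Derivation.leibniz, map_add,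
        MvPolynomial.pderiv_X_self, smul_eq_mul, Matrix.cons_val_one, Matrix.cons_val_fin_one, map_one,
        MvPolynomial.pderiv_X_of_ne (show (1 : Fin 2) ≠ 0 by decide), map_zero]
      refine (hp.mul h2).congr_deriv ?_
      ring

/-- A polynomial whose function satisfies the homogeneity relation is weighted homogeneous: the
relation for the single dilation factor `2` already separates the weights. -/
lemma isWeightedHomogeneous_of_cdil {Q : MvPolynomial (Fin 2) ℂ} {a b n : ℕ}
    (h : ∀ z, ev (cdil a b 2 z) Q = 2 ^ n * ev z Q) :
    Q.IsWeightedHomogeneous ![a, b] n := by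
  set T : MvPolynomial (Fin 2) ℂ →ₐ[ℂ] MvPolynomial (Fin 2) ℂ :=
    MvPolynomial.aeval fun i => MvPolynomial.C (2 ^ (![a, b] i)) * MvPolynomial.X i with hT
  have hTc : ∀ (p : MvPolynomial (Fin 2) ℂ) (m : Fin 2 →₀ ℕ),
      (T p).coeff m = 2 ^ (Finsupp.weight ![a, b] m) * p.coeff m := by
    intro p m
    induction p using MvPolynomial.induction_on' with
    | add p q hp hq => rw [map_add, MvPolynomial.coeff_add, hp, hq, MvPolynomial.coeff_add]; ring
    | monomial k c =>
      have : T (MvPolynomial.monomial k c)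
          = MvPolynomial.monomial k (2 ^ (Finsupp.weight ![a, b] k) * c) := by
        rw [hT, MvPolynomial.aeval_monomial, MvPolynomial.algebraMap_eq,
          Finsupp.prod_fintype _ _ (by simp), MvPolynomial.monomial_eq,
          Finsupp.prod_fintype _ _ (by simp), Finsupp.weight_apply,
          Finsupp.sum_fintype _ _ (by simp)]
        simp only [Fin.prod_univ_two, Fin.sum_univ_two, mul_pow, ← map_pow, map_mul, pow_add,
          smul_eq_mul, Matrix.cons_val_zero, Matrix.cons_val_one]
        ring
      rw [this, MvPolynomial.coeff_monomial, MvPolynomial.coeff_monomial]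
      split_ifs with hk
      · rw [hk]
      · simp
  have hTQ : T Q = MvPolynomial.C (2 ^ n) * Q := by
    refine MvPolynomial.funext fun x => ?_
    have hx := h (x 0, x 1)
    have e1 : MvPolynomial.eval x (T Q) = ev (cdil a b 2 (x 0, x 1)) Q := by
      rw [hT, ev, ← MvPolynomial.coe_aeval_eq_eval, ← MvPolynomial.coe_aeval_eq_eval]
      change (MvPolynomial.aeval x) (MvPolynomial.aeval _ Q) = MvPolynomial.aeval _ Q
      rw [← AlgHom.comp_apply, MvPolynomial.comp_aeval]
      congr 2
      funext i
      fin_cases i <;> simp [cdil]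
    rw [e1, hx, map_mul, MvPolynomial.eval_C, ev]
    congr 2
    congr 1
    funext i
    fin_cases i <;> rfl
  intro m hm
  have h1 := hTc Q m
  rw [hTQ, MvPolynomial.coeff_C_mul] at h1
  have h2 := mul_right_cancel₀ hm h1
  have h3 : (2 : ℕ) ^ n = 2 ^ (Finsupp.weight ![a, b] m) := by exact_mod_cast h2
  exact (Nat.pow_right_injective le_rfl h3).symm

lemma euler_ev {Q : MvPolynomial (Fin 2) ℂ} {a b n : ℕ}
    (h : Q.IsWeightedHomogeneous ![a, b] n) (z : ℂ × ℂ) :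
    a * z.1 * ev z (MvPolynomial.pderiv 0 Q) + b * z.2 * ev z (MvPolynomial.pderiv 1 Q)
      = n * ev z Q := by
  have := congrArg (MvPolynomial.eval ![z.1, z.2]) h.sum_weight_X_mul_pderiv
  simp only [Fin.sum_univ_two, map_add, map_mul, map_natCast, MvPolynomial.eval_X,
    Matrix.cons_val_zero, Matrix.cons_val_one, nsmul_eq_mul] at this
  simp only [ev]
  linear_combination this

/-- A weighted homogeneous polynomial that vanishes along a curve transverse to the orbits of the
dilations is zero. Euler's identity and the derivative along the curve are two independent linear
equations for the partial derivatives, which therefore vanish along the curve too. -/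
lemma eq_zero_of_transverse {a b : ℕ} (ha : 0 < a) (hb : 0 < b) {U : Set ℂ} (hU : IsOpen U)
    (hne : U.Nonempty) {φ : ℂ → ℂ × ℂ} (hφ : ∀ ζ ∈ U, DifferentiableAt ℂ φ ζ)
    (hD : ∀ ζ ∈ U, (deriv φ ζ).1 * (b * (φ ζ).2) - (deriv φ ζ).2 * (a * (φ ζ).1) ≠ 0) :
    ∀ (n : ℕ) (Q : MvPolynomial (Fin 2) ℂ), Q.IsWeightedHomogeneous ![a, b] n →
      (∀ ζ ∈ U, ev (φ ζ) Q = 0) → Q = 0 := by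
  intro n
  induction n using Nat.strong_induction_on with
  | _ n ih =>
  intro Q hQ hz
  have hpt : ∀ ζ ∈ U, ev (φ ζ) (MvPolynomial.pderiv 0 Q) = 0 ∧
      ev (φ ζ) (MvPolynomial.pderiv 1 Q) = 0 := by
    intro ζ hζ
    have e1 := euler_ev hQ (φ ζ)
    rw [hz ζ hζ, mul_zero] at e1
    have e2 : ev (φ ζ) (MvPolynomial.pderiv 0 Q) * (deriv φ ζ).1
        + ev (φ ζ) (MvPolynomial.pderiv 1 Q) * (deriv φ ζ).2 = 0 := by
      refine (hasDerivAt_ev (hφ ζ hζ).hasDerivAt Q).unique ?_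
      refine (hasDerivAt_const ζ (0 : ℂ)).congr_of_eventuallyEq ?_
      filter_upwards [hU.mem_nhds hζ] with x hx using hz x hx
    constructor <;> refine (mul_eq_zero.1 ?_).resolve_left (hD ζ hζ)
    · linear_combination b * (φ ζ).2 * e2 - (deriv φ ζ).2 * e1
    · linear_combination (deriv φ ζ).1 * e1 - a * (φ ζ).1 * e2
  have hw : ∀ i : Fin 2, 0 < ![a, b] i := by intro i; fin_cases i <;> simpa
  have hpd : ∀ i : Fin 2, MvPolynomial.pderiv i Q = 0 := by
    intro i
    by_cases hi : ![a, b] i ≤ n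
    · refine ih (n - ![a, b] i) (Nat.sub_lt ((hw i).trans_le hi) (hw i)) _
        (hQ.pderiv (Nat.sub_add_cancel hi)) fun ζ hζ => ?_
      fin_cases i
      · exact (hpt ζ hζ).1
      · exact (hpt ζ hζ).2
    · ext m
      rw [MvPolynomial.coeff_pderiv, hQ.coeff_eq_zero, zero_mul, MvPolynomial.coeff_zero]
      rw [map_add, Finsupp.weight_single]
      simp only [smul_eq_mul, one_mul]
      omega
  have hC : Q = MvPolynomial.C (Q.coeff 0) := by
    ext m
    rw [MvPolynomial.coeff_C]
    split_ifs with h0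
    · rw [h0]
    · obtain ⟨i, hi⟩ : ∃ i, m i ≠ 0 := by
        by_contra! hcon
        exact h0 (Finsupp.ext fun i => (hcon i).symm)
      have h1 := congrArg (MvPolynomial.coeff (m - Finsupp.single i 1)) (hpd i)
      rw [MvPolynomial.coeff_pderiv, MvPolynomial.coeff_zero] at h1
      have h2 : m - Finsupp.single i 1 + Finsupp.single i 1 = m :=
        tsub_add_cancel_of_le (by simpa [Nat.one_le_iff_ne_zero] using hi)
      rw [h2] at h1
      exact (mul_eq_zero.1 h1).resolve_right (Nat.cast_add_one_ne_zero _)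
  obtain ⟨ζ, hζ⟩ := hne
  have h1 := hz ζ hζ
  rw [hC, ev, MvPolynomial.eval_C] at h1
  rw [hC, h1, map_zero]

/-- If `α p' = p β` with `p` a nonzero polynomial vanishing at `0`, then `α 0 = 0`, because the
logarithmic derivative of `p` has a pole at `0`. -/
lemma zero_of_log_deriv {p : Polynomial ℂ} (hp : p ≠ 0) (h0 : p.eval 0 = 0) {α β : ℂ → ℂ}
    (hα : Continuous α) (hβ : Continuous β)
    (h : ∀ y, α y * p.derivative.eval y = p.eval y * β y) : α 0 = 0 := by
  obtain ⟨g, hg, hndvd⟩ := Polynomial.exists_eq_pow_rootMultiplicity_mul_and_not_dvd p hp 0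
  have hk : p.rootMultiplicity 0 ≠ 0 := ((Polynomial.rootMultiplicity_pos hp).2 h0).ne'
  obtain ⟨k, hk⟩ := Nat.exists_eq_succ_of_ne_zero hk
  rw [hk, map_zero, sub_zero] at hg
  rw [map_zero, sub_zero] at hndvd
  have hg0 : g.eval 0 ≠ 0 := fun hc => hndvd (by
    have := Polynomial.dvd_iff_isRoot.2 (show g.IsRoot 0 from hc)
    simpa using this)
  have heq : ∀ y : ℂ, y ≠ 0 →
      α y * ((k + 1) * g.eval y + y * g.derivative.eval y) = y * g.eval y * β y := by
    intro y hy
    have h1 := h y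
    rw [hg] at h1
    simp only [Polynomial.derivative_mul, Polynomial.derivative_X_pow, Polynomial.eval_add,
      Polynomial.eval_mul, Polynomial.eval_pow, Polynomial.eval_X, Polynomial.eval_C,
      Nat.succ_eq_add_one, Nat.add_sub_cancel, Nat.cast_add, Nat.cast_one] at h1
    refine mul_left_cancel₀ (pow_ne_zero k hy) ?_
    linear_combination h1
  have hfun : (fun y => α y * ((k + 1) * g.eval y + y * g.derivative.eval y))
      = fun y => y * g.eval y * β y := by
    refine Continuous.ext_on (dense_compl_singleton (0 : ℂ)) ?_ ?_ fun y hy => heq y hy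
    · exact hα.mul ((continuous_const.mul g.continuous).add
        (continuous_id.mul g.derivative.continuous))
    · exact (continuous_id.mul g.continuous).mul hβ
  have h1 := congrFun hfun 0
  simp only [zero_mul, add_zero] at h1
  refine (mul_eq_zero.1 h1).resolve_right (mul_ne_zero ?_ hg0)
  exact_mod_cast Nat.succ_ne_zero k

/-- If `(N₁, N₂)` is a continuous field proportional to `dF`, then its contraction with the Euler
field vanishes on `{F = 0}`. -/
lemma euler_contraction_zero {Q : MvPolynomial (Fin 2) ℂ} (hQ0 : Q ≠ 0) {a b n : ℕ}
    (hQ : Q.IsWeightedHomogeneous ![a, b] n) {N₁ N₂ : ℂ × ℂ → ℂ} (h1 : Continuous N₁)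
    (h2 : Continuous N₂)
    (hN : ∀ z, ev z (MvPolynomial.pderiv 0 Q) * N₂ z = ev z (MvPolynomial.pderiv 1 Q) * N₁ z)
    {z : ℂ × ℂ} (hz : ev z Q = 0) : N₁ z * (a * z.1) + N₂ z * (b * z.2) = 0 := by
  obtain ⟨x, hx⟩ : ∃ x : ℂ × ℂ, ev x Q ≠ 0 := by
    by_contra! hcon
    refine hQ0 (MvPolynomial.funext fun x => ?_)
    have := hcon (x 0, x 1)
    rw [ev] at this
    rw [map_zero, ← this]
    congr 2
    funext i
    fin_cases i <;> rfl
  set η : ℂ × ℂ := x - z with hη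
  set γ : ℂ → ℂ × ℂ := fun y => z + y • η with hγ
  have hγd : ∀ y, HasDerivAt γ η y := by
    intro y
    exact (((hasDerivAt_id y).smul_const η).const_add z).congr_deriv (one_smul _ _)
  have hγc : Continuous γ := by rw [hγ]; fun_prop
  set p : Polynomial ℂ := MvPolynomial.aeval ![Polynomial.C z.1 + Polynomial.X * Polynomial.C η.1,
    Polynomial.C z.2 + Polynomial.X * Polynomial.C η.2] Q with hp
  have hpe : ∀ y, p.eval y = ev (γ y) Q := by
    intro y
    rw [hp, ev, ← MvPolynomial.coe_aeval_eq_eval, ← Polynomial.coe_aeval_eq_eval]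
    change (Polynomial.aeval y) (MvPolynomial.aeval _ Q) = MvPolynomial.aeval _ Q
    rw [← AlgHom.comp_apply, MvPolynomial.comp_aeval]
    congr 2
    funext i
    fin_cases i <;> simp [hγ] <;> ring
  have hpd : ∀ y, p.derivative.eval y = ev (γ y) (MvPolynomial.pderiv 0 Q) * η.1
      + ev (γ y) (MvPolynomial.pderiv 1 Q) * η.2 := by
    intro y
    refine (p.hasDerivAt y).unique ?_
    have := hasDerivAt_ev (hγd y) Q
    rwa [show (fun s => ev (γ s) Q) = fun s => p.eval s from funext fun s => (hpe s).symm] at this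
  have hp0 : p ≠ 0 := by
    intro hc
    have := hpe 1
    rw [hc, Polynomial.eval_zero] at this
    exact hx (by rw [this]; simp [hγ, hη])
  have hγ0 : γ 0 = z := by simp [hγ]
  have := zero_of_log_deriv hp0 (by rw [hpe, hγ0, hz])
    (α := fun y => N₁ (γ y) * (a * (γ y).1) + N₂ (γ y) * (b * (γ y).2))
    (β := fun y => n * (η.1 * N₁ (γ y) + η.2 * N₂ (γ y)))
    (by fun_prop) (by fun_prop) (fun y => by
      rw [hpd, hpe]
      have e1 := hN (γ y)
      have e2 := euler_ev hQ (γ y)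
      linear_combination (N₁ (γ y) * η.1 + N₂ (γ y) * η.2) * e2
        + (b * (γ y).2 * η.1 - a * (γ y).1 * η.2) * e1)
  simpa [hγ0] using this

/-- `P` is harmonic along the level sets of a nonconstant weighted homogeneous polynomial whose
differential is proportional to the rows of the complex Hessian of `P`. -/
lemma harmonicAlong_levels {P : ℂ × ℂ → ℝ} (hP : ContDiff ℝ 2 fun w => (P w : ℂ))
    {Q : MvPolynomial (Fin 2) ℂ} (hQ0 : Q ≠ 0) {a b n : ℕ} (ha : 0 < a) (hb : 0 < b) (hn : n ≠ 0)
    (hQ : Q.IsWeightedHomogeneous ![a, b] n)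
    (hN : ∀ e : ℂ × ℂ, e = (1, 0) ∨ e = (0, 1) → ∀ z,
      ev z (MvPolynomial.pderiv 0 Q) * mixedDeriv P (0, 1) e z
        = ev z (MvPolynomial.pderiv 1 Q) * mixedDeriv P (1, 0) e z) (c : ℂ) :
    HarmonicAlong P ((fun z => ev z Q) ⁻¹' {c}) := by
  intro φ hφ hinj hsub ζ hζ
  rw [lap_comp hP hφ hζ]
  have hval : ∀ ζ ∈ ball (0 : ℂ) 1, ev (φ ζ) Q = c := fun ζ hζ => hsub (mem_image_of_mem φ hζ)
  have hda : ∀ ζ ∈ ball (0 : ℂ) 1, DifferentiableAt ℂ φ ζ := fun ζ hζ =>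
    hφ.differentiableAt (isOpen_ball.mem_nhds hζ)
  suffices hB : ∀ e : ℂ × ℂ, e = (1, 0) ∨ e = (0, 1) →
      mixedDeriv P (1, 0) e (φ ζ) * (deriv φ ζ).1
        + mixedDeriv P (0, 1) e (φ ζ) * (deriv φ ζ).2 = 0 by
    have e1 := hB (1, 0) (Or.inl rfl)
    have e2 := hB (0, 1) (Or.inr rfl)
    rw [leviForm]
    linear_combination 4 * conj (deriv φ ζ).1 * e1 + 4 * conj (deriv φ ζ).2 * e2
  intro e he
  by_cases hc : c = 0
  · have hdc : ContinuousOn (deriv φ) (ball 0 1) := (hφ.deriv isOpen_ball).continuousOn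
    have hφc : ContinuousOn φ (ball 0 1) := hφ.continuousOn
    -- the curve is tangent to the Euler field
    have hD : ∀ ζ ∈ ball (0 : ℂ) 1,
        (deriv φ ζ).1 * (b * (φ ζ).2) - (deriv φ ζ).2 * (a * (φ ζ).1) = 0 := by
      by_contra! hcon
      obtain ⟨ζ₀, hζ₀, hne⟩ := hcon
      have hDc : ContinuousOn (fun ζ => (deriv φ ζ).1 * (b * (φ ζ).2)
          - (deriv φ ζ).2 * (a * (φ ζ).1)) (ball 0 1) := by fun_prop
      have hUo := hDc.isOpen_inter_preimage isOpen_ball (isOpen_compl_singleton (x := (0 : ℂ)))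
      refine hQ0 (eq_zero_of_transverse ha hb hUo ⟨ζ₀, hζ₀, hne⟩ (fun ζ hζ => hda ζ hζ.1)
        (fun ζ hζ => hζ.2) n Q hQ fun ζ hζ => ?_)
      rw [hval ζ hζ.1, hc]
    have hgood : ∀ ζ ∈ ball (0 : ℂ) 1, φ ζ ≠ 0 → mixedDeriv P (1, 0) e (φ ζ) * (deriv φ ζ).1
        + mixedDeriv P (0, 1) e (φ ζ) * (deriv φ ζ).2 = 0 := by
      intro ζ hζ hne
      have hA := euler_contraction_zero hQ0 hQ (continuous_mixedDeriv hP (1, 0) e)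
        (continuous_mixedDeriv hP (0, 1) e) (hN e he) ((hval ζ hζ).trans hc)
      have hD' := hD ζ hζ
      have ha' : (a : ℂ) ≠ 0 := by exact_mod_cast ha.ne'
      have hb' : (b : ℂ) ≠ 0 := by exact_mod_cast hb.ne'
      by_cases h1 : (φ ζ).1 = 0
      · have h2 : (φ ζ).2 ≠ 0 := fun h2 => hne (Prod.ext h1 h2)
        refine (mul_eq_zero.1 ?_).resolve_left (mul_ne_zero hb' h2)
        linear_combination (deriv φ ζ).2 * hA + mixedDeriv P (1, 0) e (φ ζ) * hD'
      · refine (mul_eq_zero.1 ?_).resolve_left (mul_ne_zero ha' h1)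
        linear_combination (deriv φ ζ).1 * hA - mixedDeriv P (0, 1) e (φ ζ) * hD'
    by_cases h0 : φ ζ = 0
    · -- by injectivity this happens at one parameter only, and continuity settles it
      have hBc : ContinuousOn (fun ζ => mixedDeriv P (1, 0) e (φ ζ) * (deriv φ ζ).1
          + mixedDeriv P (0, 1) e (φ ζ) * (deriv φ ζ).2) (ball 0 1) := by
        have k1 := (continuous_mixedDeriv hP (1, 0) e).comp_continuousOn hφc
        have k2 := (continuous_mixedDeriv hP (0, 1) e).comp_continuousOn hφc
        exact (k1.mul hdc.fst).add (k2.mul hdc.snd)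
      have ht := ((hBc.continuousAt (isOpen_ball.mem_nhds hζ)).tendsto).mono_left
        (nhdsWithin_le_nhds (s := {ζ}ᶜ))
      refine tendsto_nhds_unique ht (tendsto_const_nhds.congr' ?_)
      filter_upwards [self_mem_nhdsWithin, nhdsWithin_le_nhds (isOpen_ball.mem_nhds hζ)]
        with x hx hxb
      exact (hgood x hxb fun hx0 => hx (hinj hxb hζ (hx0.trans h0.symm))).symm
    · exact hgood ζ hζ h0
  · have e2 : ev (φ ζ) (MvPolynomial.pderiv 0 Q) * (deriv φ ζ).1
        + ev (φ ζ) (MvPolynomial.pderiv 1 Q) * (deriv φ ζ).2 = 0 := by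
      refine (hasDerivAt_ev (hda ζ hζ).hasDerivAt Q).unique ?_
      refine (hasDerivAt_const ζ c).congr_of_eventuallyEq ?_
      filter_upwards [isOpen_ball.mem_nhds hζ] with x hx using hval x hx
    have e3 := hN e he (φ ζ)
    have e4 := euler_ev hQ (φ ζ)
    rw [hval ζ hζ] at e4
    have hn' : (n : ℂ) ≠ 0 := by exact_mod_cast hn
    by_cases h1 : ev (φ ζ) (MvPolynomial.pderiv 0 Q) = 0
    · have h2 : ev (φ ζ) (MvPolynomial.pderiv 1 Q) ≠ 0 := by
        intro h2
        rw [h1, h2, mul_zero, mul_zero, add_zero] at e4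
        exact mul_ne_zero hn' hc e4.symm
      refine (mul_eq_zero.1 ?_).resolve_left h2
      linear_combination mixedDeriv P (0, 1) e (φ ζ) * e2 - (deriv φ ζ).1 * e3
    · refine (mul_eq_zero.1 ?_).resolve_left h1
      linear_combination mixedDeriv P (1, 0) e (φ ζ) * e2 + (deriv φ ζ).2 * e3

/-! ### Dilations and the conclusion -/

lemma wdil_pow (m₁ m₂ : ℕ) (hm₁ : 0 < m₁) (hm₂ : 0 < m₂) {s : ℝ} (hs : 0 ≤ s) (z : ℂ × ℂ) :
    wdil m₁ m₂ (s ^ (m₁ * m₂)) z = cdil m₂ m₁ s z := by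
  have h1 : (s ^ (m₁ * m₂)) ^ ((m₁ : ℝ)⁻¹) = s ^ m₂ := by
    rw [mul_comm, pow_mul, Real.pow_rpow_inv_natCast (by positivity) hm₁.ne']
  have h2 : (s ^ (m₁ * m₂)) ^ ((m₂ : ℝ)⁻¹) = s ^ m₁ := by
    rw [pow_mul, Real.pow_rpow_inv_natCast (by positivity) hm₂.ne']
  simp [wdil, cdil, h1, h2]

lemma lap_const_mul (c : ℝ) (u : ℂ → ℝ) (z : ℂ) : lap (fun w => c * u w) z = c * lap u z := by
  have key : ∀ (f : ℂ → ℂ) (x : ℂ),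
      fderiv ℝ (fun w => (c : ℂ) * f w) x = (c : ℂ) • fderiv ℝ f x := by
    intro f x
    exact congrFun (fderiv_const_smul_field (𝕜 := ℝ) (c : ℂ) (f := f)) x
  have h1 : (wdbar1 fun w => ((c * u w : ℝ) : ℂ))
      = fun w => (c : ℂ) * wdbar1 (fun w => (u w : ℂ)) w := by
    funext w
    simp only [wdbar1, Complex.ofReal_mul, key]
    simp only [smul_apply, smul_eq_mul]
    ring
  rw [lap, lap, h1, wd1, wd1, key]
  simp only [smul_apply, smul_eq_mul]
  ring

lemma harmonicAlong_dilate {P : ℂ × ℂ → ℝ} {H : ℂ × ℂ → ℂ} {a b N : ℕ} {s : ℝ} (hs : 0 < s)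
    (hPs : ∀ z, P (cdil a b s z) = s ^ N * P z) (hB : ∀ c, HarmonicAlong P (H ⁻¹' {c})) (c : ℂ) :
    HarmonicAlong P ((fun z => H (cdil a b s z)) ⁻¹' {c}) := by
  intro φ hφ hinj hsub ζ hζ
  have hsc : (s : ℂ) ≠ 0 := by exact_mod_cast hs.ne'
  have h := hB c (fun w => cdil a b s (φ w))
    ((differentiable_cdil a b s).comp_differentiableOn hφ) ?_ ?_ ζ hζ
  · simp only [hPs] at h
    rw [lap_const_mul] at h
    refine (mul_eq_zero.1 h).resolve_left ?_
    exact_mod_cast (pow_pos hs N).ne'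
  · intro x hx y hy hxy
    simp only [cdil, Prod.mk.injEq] at hxy
    exact hinj hx hy (Prod.ext (mul_left_cancel₀ (pow_ne_zero a hsc) hxy.1)
      (mul_left_cancel₀ (pow_ne_zero b hsc) hxy.2))
  · rintro _ ⟨x, hx, rfl⟩
    exact hsub (mem_image_of_mem φ hx)

/-- Lemma 3.2: if an `(m₁,m₂)`-homogeneous plurisubharmonic,
non-pluriharmonic polynomial has Property (B), the entire function can be taken to
be an `(m₁,m₂)`-homogeneous holomorphic polynomial of some weight `q*`. -/
theorem homogeneous_levels (m₁ m₂ : ℕ) (hm₁ : 0 < m₁) (hm₂ : 0 < m₂) (P : ℂ × ℂ → ℝ)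
    (hpoly : IsRealPoly2 P) (hpsh : IsPsh P) (hnph : ¬ IsPluriharmonic P)
    (hhom : WHomog m₁ m₂ P 1) (hB : PropertyB P) :
    ∃ (qs : ℚ) (F : ℂ × ℂ → ℂ), IsPolyMap2 F ∧
      (∀ t : ℝ, 0 < t → ∀ z : ℂ × ℂ,
        F (wdil m₁ m₂ t z) = ((t ^ (qs : ℝ) : ℝ) : ℂ) * F z) ∧
      ∀ c : ℂ, HarmonicAlong P (F ⁻¹' {c}) := by
  obtain ⟨H, hH, hHB⟩ := hB
  have hP := contDiff_of_isRealPoly2 hpoly 2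
  by_cases hconst : ∀ n, 1 ≤ n → ∀ z, hcomp H m₂ m₁ n z = 0
  · -- `H` is constant, so `P` is harmonic along every holomorphic disc
    have hHc := const_of_hcomp_eq_zero hH hm₂ hm₁ hconst
    refine ⟨0, fun _ => 0, ⟨0, by simp⟩, by simp, fun c φ hφ hinj _ => ?_⟩
    exact hHB (H 0) φ hφ hinj fun x _ => hHc x
  push Not at hconst
  obtain ⟨n, hn, z₀, hz₀⟩ := hconst
  obtain ⟨Q, hQ⟩ := isPolyMap2_hcomp hH hm₂ hm₁ n
  have hQe : ∀ z, hcomp H m₂ m₁ n z = ev z Q := hQ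
  have hwh : Q.IsWeightedHomogeneous ![m₂, m₁] n :=
    isWeightedHomogeneous_of_cdil fun z => by rw [← hQe, ← hQe, hcomp_cdil hH]
  have hQ0 : Q ≠ 0 := by
    rintro rfl
    exact hz₀ (by rw [hQ, map_zero])
  have hPs : ∀ s : ℝ, 0 < s → ∀ z, P (cdil m₂ m₁ s z) = s ^ (m₁ * m₂) * P z := by
    intro s hs z
    rw [← wdil_pow m₁ m₂ hm₁ hm₂ hs.le, hhom _ (pow_pos hs _), Real.rpow_one]
  have hN : ∀ e : ℂ × ℂ, e = (1, 0) ∨ e = (0, 1) → ∀ z,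
      ev z (MvPolynomial.pderiv 0 Q) * mixedDeriv P (0, 1) e z
        = ev z (MvPolynomial.pderiv 1 Q) * mixedDeriv P (1, 0) e z := by
    intro e he z
    set v : ℂ × ℂ := (-mixedDeriv P (0, 1) e z, mixedDeriv P (1, 0) e z) with hv
    have h1 := hasDerivAt_hcomp_zero hH m₂ m₁ n z v fun s hs =>
      level_pde hP hpsh (hH.comp (differentiable_cdil m₂ m₁ (s : ℂ)))
        (harmonicAlong_dilate hs (hPs s hs) hHB) e he z
    have hγ : HasDerivAt (fun ε : ℂ => z + ε • v) v 0 := by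
      simpa using ((hasDerivAt_id (0 : ℂ)).smul_const v).const_add z
    have h2 := hasDerivAt_ev hγ Q
    simp only [hQe] at h1
    have h3 := h2.unique h1
    simp only [zero_smul, add_zero, hv] at h3
    linear_combination -h3
  refine ⟨(n : ℚ) / (m₁ * m₂), fun z => ev z Q, ⟨Q, fun z => rfl⟩, fun t ht z => ?_,
    harmonicAlong_levels hP hQ0 hm₂ hm₁ (by omega) hwh hN⟩
  set s : ℝ := t ^ (((m₁ * m₂ : ℕ) : ℝ)⁻¹) with hs
  have hst : s ^ (m₁ * m₂) = t := Real.rpow_inv_natCast_pow ht.le (by positivity)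
  have hsn : t ^ (((n : ℚ) / (m₁ * m₂) : ℚ) : ℝ) = s ^ n := by
    rw [hs, ← Real.rpow_natCast (t ^ _) n, ← Real.rpow_mul ht.le]
    congr 1
    push_cast
    ring
  beta_reduce
  rw [hsn, ← hQe, ← hQe]
  conv_lhs => rw [← hst]
  rw [wdil_pow m₁ m₂ hm₁ hm₂ (by positivity), hcomp_cdil hH]
  push_cast
  rfl
end
end

section
/- Let P be a plurisubharmonic real polynomial on C², homogeneous of degree 2k, such that the function z ↦ P(z, 0) is subharmonic and non-harmonic on C. Then the set {ζ ∈ C : the function w ↦ P(ζw, w) is harmonic on C} is bounded. -/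
/-!
Along the complex line spanned by `v`, the Laplacian of `w ↦ P (w v)` is `4 M(v, w v)`, where
`M(v, z) = ∂_v ∂̄_v P (z)` (`lap_line`). This `M` is jointly continuous in `(v, z)`
(`continuous_mixedDeriv`) and satisfies `M(c v, z) = |c|² M(v, z)` (`mixedDeriv_smul`).
As `P (·, 0)` is not harmonic, `M((1, 0), (w, 0)) ≠ 0` for some `w`, so
`M((1, ε), (w, ε w)) ≠ 0` for all small `ε`. The vector `(ζ, 1)` is `ζ` times `(1, ζ⁻¹)`, so for
large `|ζ|` the function `w ↦ P (ζ w, w)` is not harmonic.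
-/

open Complex ComplexConjugate Metric Set

noncomputable section

lemma contDiff_of_isRealPoly2_s11 {P : ℂ × ℂ → ℝ} (h : IsRealPoly2 P) :
    ContDiff ℝ 2 (fun z => (P z : ℂ)) := by
  obtain ⟨Q, hQ⟩ := h
  rw [funext hQ]
  clear hQ
  have hc : ContDiff ℝ 2 (fun z : ℂ => conj z) := Complex.conjCLE.contDiff
  have hx : ∀ i : Fin 4,
      ContDiff ℝ 2 (fun z : ℂ × ℂ => (![z.1, conj z.1, z.2, conj z.2] : Fin 4 → ℂ) i) := by
    intro i
    fin_cases i
    · exact contDiff_fst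
    · exact hc.comp contDiff_fst
    · exact contDiff_snd
    · exact hc.comp contDiff_snd
  induction Q using MvPolynomial.induction_on with
  | C a => simpa using contDiff_const
  | add p q hp hq => simpa using hp.add hq
  | mul_X p i hp => simpa using hp.mul (hx i)

/-- The mixed derivative written through the real second derivative. -/
lemma mixedDeriv_eq {P : ℂ × ℂ → ℝ} (h : ContDiff ℝ 2 (fun z => (P z : ℂ))) (v z : ℂ × ℂ) :
    mixedDeriv P v v z =
      let B := fderiv ℝ (fderiv ℝ (fun z => (P z : ℂ))) z
      (1 / 4) * (B v v + I * B v (I • v) - I * (B (I • v) v + I * B (I • v) (I • v))) := by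
  have hd : DifferentiableAt ℝ (fderiv ℝ (fun z => (P z : ℂ))) z :=
    ((h.fderiv_right (m := 1) (by norm_num)).differentiable (by norm_num)) z
  have key : ∀ e, fderiv ℝ (wdbar (fun z => (P z : ℂ)) v) z e =
      (1 / 2) * (fderiv ℝ (fderiv ℝ (fun z => (P z : ℂ))) z e v
        + I * fderiv ℝ (fderiv ℝ (fun z => (P z : ℂ))) z e (I • v)) := by
    intro e
    have h1 : ∀ u : ℂ × ℂ, HasFDerivAt (fun y => fderiv ℝ (fun z => (P z : ℂ)) y u)
        ((fderiv ℝ (fderiv ℝ (fun z => (P z : ℂ))) z).flip u) z := by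
      intro u
      simpa using hd.hasFDerivAt.clm_apply (hasFDerivAt_const u z)
    have h2 := ((h1 v).add ((h1 (I • v)).const_mul I)).const_mul (1 / 2 : ℂ)
    have h3 : HasFDerivAt (wdbar (fun z => (P z : ℂ)) v) _ z := h2
    rw [h3.fderiv]
    simp
    ring
  simp only [mixedDeriv, wd, key]
  ring

lemma continuous_mixedDeriv_s11 {P : ℂ × ℂ → ℝ} (h : ContDiff ℝ 2 (fun z => (P z : ℂ))) :
    Continuous (fun p : (ℂ × ℂ) × (ℂ × ℂ) => mixedDeriv P p.1 p.1 p.2) := by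
  have hB : Continuous (fderiv ℝ (fderiv ℝ (fun z => (P z : ℂ)))) :=
    (h.fderiv_right (m := 1) (by norm_num)).continuous_fderiv (by norm_num)
  simp only [mixedDeriv_eq h]
  fun_prop

lemma mixedDeriv_smul {P : ℂ × ℂ → ℝ} (h : ContDiff ℝ 2 (fun z => (P z : ℂ)))
    (c : ℂ) (v z : ℂ × ℂ) :
    mixedDeriv P (c • v) (c • v) z = c * conj c * mixedDeriv P v v z := by
  have h1 : c • v = c.re • v + c.im • (I • v) := by
    conv_lhs => rw [← Complex.re_add_im c, add_smul, mul_smul]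
    rfl
  have h2 : I • c • v = c.re • (I • v) - c.im • v := by
    rw [h1, smul_add, smul_comm I c.re, smul_comm I c.im, smul_smul, I_mul_I]
    simp [sub_eq_add_neg]
  have h3 : c * conj c = (c.re : ℂ) ^ 2 + (c.im : ℂ) ^ 2 := by
    rw [Complex.mul_conj, Complex.normSq_apply]; push_cast; ring
  rw [mixedDeriv_eq h, mixedDeriv_eq h, h2, h1, h3]
  simp only [map_add, map_sub, map_smul, add_apply,
    sub_apply, smul_apply, Complex.real_smul]
  ring_nf
  simp only [I_sq]
  ring

/-- The Laplacian of the restriction of `P` to the complex line spanned by `v`. -/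
lemma lap_line {P : ℂ × ℂ → ℝ} (h : ContDiff ℝ 2 (fun z => (P z : ℂ))) (v : ℂ × ℂ) (w : ℂ) :
    lap (fun w => P (w • v)) w = 4 * mixedDeriv P v v (w • v) := by
  let L : ℂ →L[ℝ] ℂ × ℂ := (ContinuousLinearMap.id ℝ ℂ).smulRight v
  have hL : ∀ w, L w = w • v := fun w => rfl
  have chain : ∀ (f : ℂ × ℂ → ℂ), Differentiable ℝ f → ∀ w e,
      fderiv ℝ (fun w : ℂ => f (w • v)) w e = fderiv ℝ f (w • v) (e • v) := by
    intro f hf w e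
    have h1 : HasFDerivAt (fun w : ℂ => f (w • v)) _ w :=
      (hf (L w)).hasFDerivAt.comp w L.hasFDerivAt
    rw [h1.fderiv]
    rfl
  have hdf : Differentiable ℝ (fderiv ℝ (fun z => (P z : ℂ))) :=
    (h.fderiv_right (m := 1) (by norm_num)).differentiable (by norm_num)
  have hd : Differentiable ℝ (wdbar (fun z => (P z : ℂ)) v) := by
    unfold wdbar
    fun_prop
  have hbar : (wdbar1 fun w => ((P (w • v) : ℝ) : ℂ)) =
      fun w => wdbar (fun z => (P z : ℂ)) v (w • v) := by
    funext w
    simp only [wdbar1, wdbar, chain _ (h.differentiable (by norm_num)), one_smul]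
  simp only [lap, hbar, wd1, chain _ hd, mixedDeriv, wd, one_smul]

/-- if `z ↦ P(z,0)` is subharmonic and non-harmonic, the set of
directions `ζ` along which the homogeneous plurisubharmonic polynomial `P` is
harmonic is bounded. -/
theorem harmonic_directions_bounded (k : ℕ) (hk : 1 ≤ k) (P : ℂ × ℂ → ℝ)
    (hpoly : IsRealPoly2 P) (hpsh : IsPsh P) (hhom : HomogeneousDeg P (2 * k))
    (hsub : Subharmonic fun z => P (z, 0)) (hnh : ¬ IsHarmonic fun z => P (z, 0)) :
    Bornology.IsBounded {ζ : ℂ | IsHarmonic fun w => P (ζ * w, w)} := by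
  have h := contDiff_of_isRealPoly2_s11 hpoly
  simp only [IsHarmonic, not_forall] at hnh
  obtain ⟨w, hw⟩ := hnh
  have hw0 : mixedDeriv P (1, 0) (1, 0) (w • ((1, 0) : ℂ × ℂ)) ≠ 0 := by
    intro h0
    apply hw
    have := lap_line h (1, 0) w
    rw [h0] at this
    simpa using this
  have hpair : Continuous fun ε : ℂ => (((1, ε) : ℂ × ℂ), w • ((1, ε) : ℂ × ℂ)) := by
    fun_prop
  have hcont := (continuous_mixedDeriv_s11 h).comp hpair
  have hev : ∀ᶠ ε in nhds (0 : ℂ),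
      mixedDeriv P (1, ε) (1, ε) (w • ((1, ε) : ℂ × ℂ)) ≠ 0 :=
    hcont.continuousAt.eventually (isOpen_ne.mem_nhds hw0)
  obtain ⟨δ, hδ, hball⟩ := Metric.eventually_nhds_iff.1 hev
  refine (Metric.isBounded_closedBall (x := (0 : ℂ)) (r := δ⁻¹)).subset ?_
  intro ζ hζ
  by_contra hbig
  rw [mem_closedBall_zero_iff, not_le] at hbig
  have hpos : 0 < ‖ζ‖ := (inv_pos.2 hδ).trans hbig
  have hζ0 : ζ ≠ 0 := norm_pos_iff.1 hpos
  have hne := hball (y := ζ⁻¹) (by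
    rw [dist_zero_right, norm_inv]
    exact inv_lt_of_inv_lt₀ hδ hbig)
  apply hne
  have hv : ((1, ζ⁻¹) : ℂ × ℂ) = ζ⁻¹ • ((ζ, 1) : ℂ × ℂ) := by
    simp [hζ0]
  rw [hv, mixedDeriv_smul h, smul_smul]
  have hl := lap_line h (ζ, 1) (w * ζ⁻¹)
  have hz : lap (fun w => P (w • ((ζ, 1) : ℂ × ℂ))) (w * ζ⁻¹) = 0 := by
    simpa [mul_comm] using hζ (w * ζ⁻¹)
  rw [hz] at hl
  have : mixedDeriv P (ζ, 1) (ζ, 1) ((w * ζ⁻¹) • (ζ, 1)) = 0 := by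
    simpa using hl.symm
  rw [this, mul_zero]

end
end

section
/- Let Q be a plurisubharmonic real polynomial on C² that is not harmonic (as a function on C² ≅ R⁴), homogeneous of degree 2p in z₁ and of degree 2q in z₂, i.e., Q(t z₁, z₂) = t^{2p} Q(z₁, z₂) and Q(z₁, t z₂) = t^{2q} Q(z₁, z₂) for all real t > 0. Then ∫₀^{2π} ∫₀^{2π} Q(e^{iθ}, e^{iτ}) dθ dτ > 0; equivalently, the coefficient of the monomial |z₁|^{2p}|z₂|^{2q} in Q is strictly positive. -/
/-!
The torus average of `Q` is controlled by those of `∂₁∂̄₁Q` and `∂₂∂̄₂Q`, the diagonal entries of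
the Levi form, which are nonnegative. Over the torus of radii `r, s` only the monomials
`|z₁|^{2j}|z₂|^{2k}` survive integration, so `(r ∂/∂r)²` of the torus integral of `Q` is the torus
integral of `4|z₁|²∂₁∂̄₁Q` (`radial_fst`). By homogeneity it is also `4p²` times the torus integral
of `Q`; likewise with `q` in the second variable. Hence the average of `Q` is nonnegative.

If it is zero, it is zero over tori of all radii by homogeneity, so the continuous nonnegative
functions `∂₁∂̄₁Q` and `∂₂∂̄₂Q` have zero integral over all these tori and vanish identically
(`eq_zero_of_torus`). Then `Q` is harmonic, a contradiction.
-/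


open Complex ComplexConjugate Metric Set

noncomputable section

/-! ### Polynomials in `z₁, z̄₁, z₂, z̄₂` and their Wirtinger derivatives -/

/-- The real-linear coordinate functions `z₁, z̄₁, z₂, z̄₂` on `ℂ²`. -/
def coordCLM : Fin 4 → (ℂ × ℂ →L[ℝ] ℂ) :=
  ![ContinuousLinearMap.fst ℝ ℂ ℂ,
    (conjCLE : ℂ →L[ℝ] ℂ).comp (ContinuousLinearMap.fst ℝ ℂ ℂ),
    ContinuousLinearMap.snd ℝ ℂ ℂ,
    (conjCLE : ℂ →L[ℝ] ℂ).comp (ContinuousLinearMap.snd ℝ ℂ ℂ)]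

/-- The value of the polynomial `P` at `(z₁, z̄₁, z₂, z̄₂)`. -/
def evalAt (P : MvPolynomial (Fin 4) ℂ) (z : ℂ × ℂ) : ℂ :=
  MvPolynomial.eval ![z.1, conj z.1, z.2, conj z.2] P

lemma coordCLM_apply (i : Fin 4) (z : ℂ × ℂ) :
    coordCLM i z = (![z.1, conj z.1, z.2, conj z.2] : Fin 4 → ℂ) i := by
  fin_cases i <;> simp [coordCLM]

lemma hasFDerivAt_evalAt (P : MvPolynomial (Fin 4) ℂ) (z : ℂ × ℂ) :
    HasFDerivAt (evalAt P) (∑ i, evalAt (MvPolynomial.pderiv i P) z • coordCLM i) z := by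
  induction P using MvPolynomial.induction_on with
  | C a =>
    have : evalAt (MvPolynomial.C a) = fun _ => a := by
      ext z; simp [evalAt]
    rw [this]
    refine (hasFDerivAt_const a z).congr_fderiv ?_
    ext v <;> simp [evalAt]
  | add P R hP hR =>
    have h : ∀ P R, evalAt (P + R) = evalAt P + evalAt R := by
      intro P R; ext z; simp [evalAt]
    rw [h]
    refine (hP.add hR).congr_fderiv ?_
    rw [← Finset.sum_add_distrib]
    refine Finset.sum_congr rfl fun i _ => ?_
    rw [map_add, ← add_smul, h, Pi.add_apply]
  | mul_X P j hP =>
    have h : evalAt (P * MvPolynomial.X j) = fun z => evalAt P z * coordCLM j z := by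
      ext z; rw [coordCLM_apply]; simp [evalAt]
    rw [h]
    refine (hP.mul (coordCLM j).hasFDerivAt).congr_fderiv ?_
    have h2 : ∀ i, evalAt (MvPolynomial.pderiv i (P * MvPolynomial.X j)) z =
        evalAt (MvPolynomial.pderiv i P) z * coordCLM j z
          + evalAt P z * (if i = j then 1 else 0) := by
      intro i
      rw [coordCLM_apply]
      by_cases hij : i = j
      · subst hij; simp [evalAt, Derivation.leibniz]; ring
      · simp [evalAt, Derivation.leibniz, hij, Ne.symm hij, MvPolynomial.pderiv_X]
        ring
    refine ContinuousLinearMap.ext fun v => ?_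
    simp only [h2, add_apply, sum_apply, smul_apply, smul_eq_mul, Finset.mul_sum, add_mul,
      Finset.sum_add_distrib]
    rw [add_comm]
    congr 1
    · exact Finset.sum_congr rfl fun i _ => by ring
    · simp

lemma continuous_evalAt (P : MvPolynomial (Fin 4) ℂ) : Continuous (evalAt P) :=
  continuous_iff_continuousAt.2 fun z => (hasFDerivAt_evalAt P z).continuousAt

lemma fderiv_evalAt (P : MvPolynomial (Fin 4) ℂ) (z e : ℂ × ℂ) :
    fderiv ℝ (evalAt P) z e =
      evalAt (MvPolynomial.pderiv 0 P) z * e.1 + evalAt (MvPolynomial.pderiv 1 P) z * conj e.1 +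
      evalAt (MvPolynomial.pderiv 2 P) z * e.2 + evalAt (MvPolynomial.pderiv 3 P) z * conj e.2 := by
  rw [(hasFDerivAt_evalAt P z).fderiv]
  simp [Fin.sum_univ_four, coordCLM]

lemma wd_evalAt_fst (P : MvPolynomial (Fin 4) ℂ) :
    wd (evalAt P) (1, 0) = evalAt (MvPolynomial.pderiv 0 P) := by
  ext z
  simp only [wd, fderiv_evalAt]
  simp
  linear_combination (-1/2 * evalAt (MvPolynomial.pderiv 0 P) z
    + 1/2 * evalAt (MvPolynomial.pderiv 1 P) z) * I_mul_I

lemma wd_evalAt_snd (P : MvPolynomial (Fin 4) ℂ) :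
    wd (evalAt P) (0, 1) = evalAt (MvPolynomial.pderiv 2 P) := by
  ext z
  simp only [wd, fderiv_evalAt]
  simp
  linear_combination (-1/2 * evalAt (MvPolynomial.pderiv 2 P) z
    + 1/2 * evalAt (MvPolynomial.pderiv 3 P) z) * I_mul_I

lemma wdbar_evalAt_fst (P : MvPolynomial (Fin 4) ℂ) :
    wdbar (evalAt P) (1, 0) = evalAt (MvPolynomial.pderiv 1 P) := by
  ext z
  simp only [wdbar, fderiv_evalAt]
  simp
  linear_combination (1/2 * evalAt (MvPolynomial.pderiv 0 P) z
    - 1/2 * evalAt (MvPolynomial.pderiv 1 P) z) * I_mul_I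

lemma wdbar_evalAt_snd (P : MvPolynomial (Fin 4) ℂ) :
    wdbar (evalAt P) (0, 1) = evalAt (MvPolynomial.pderiv 3 P) := by
  ext z
  simp only [wdbar, fderiv_evalAt]
  simp
  linear_combination (1/2 * evalAt (MvPolynomial.pderiv 2 P) z
    - 1/2 * evalAt (MvPolynomial.pderiv 3 P) z) * I_mul_I

/-- The polynomial whose values are the complex conjugates of those of `P`. -/
def conjPoly (P : MvPolynomial (Fin 4) ℂ) : MvPolynomial (Fin 4) ℂ :=
  MvPolynomial.rename ![1, 0, 3, 2] (MvPolynomial.map (starRingEnd ℂ) P)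

lemma evalAt_conjPoly (P : MvPolynomial (Fin 4) ℂ) (z : ℂ × ℂ) :
    evalAt (conjPoly P) z = conj (evalAt P z) := by
  rw [evalAt, evalAt, conjPoly, MvPolynomial.eval_rename, MvPolynomial.eval_map,
    MvPolynomial.eval, MvPolynomial.coe_eval₂Hom, MvPolynomial.eval₂_comp_left]
  simp only [RingHom.comp_id]
  congr 1
  ext i
  fin_cases i <;> simp

lemma pderiv_conjPoly (P : MvPolynomial (Fin 4) ℂ) (i : Fin 4) :
    MvPolynomial.pderiv ((![1, 0, 3, 2] : Fin 4 → Fin 4) i) (conjPoly P) =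
      conjPoly (MvPolynomial.pderiv i P) := by
  rw [conjPoly, MvPolynomial.pderiv_rename (by decide), MvPolynomial.pderiv_map, conjPoly]

lemma pderiv_pderiv_comm (P : MvPolynomial (Fin 4) ℂ) (i j : Fin 4) :
    MvPolynomial.pderiv i (MvPolynomial.pderiv j P) =
      MvPolynomial.pderiv j (MvPolynomial.pderiv i P) := by
  have h : ⁅MvPolynomial.pderiv (R := ℂ) i, MvPolynomial.pderiv (R := ℂ) j⁆ = 0 := by
    apply MvPolynomial.derivation_ext
    intro k
    rw [Derivation.commutator_apply]
    simp [MvPolynomial.pderiv_X, Pi.single_apply, apply_ite]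
  have h2 := congrArg (fun D => D P) h
  simpa [Derivation.commutator_apply, sub_eq_zero] using h2

/-! ### Torus integrals -/

/-- The integral of `P` over the torus of radii `r` and `s`, with respect to `dτ dθ`. -/
def torusInt (P : MvPolynomial (Fin 4) ℂ) (r s : ℝ) : ℂ :=
  ∫ θ in (0:ℝ)..(2 * Real.pi), ∫ τ in (0:ℝ)..(2 * Real.pi),
    evalAt P (r * exp (θ * I), s * exp (τ * I))

lemma continuous_torus (P : MvPolynomial (Fin 4) ℂ) (r s : ℝ) :
    Continuous (fun x : ℝ × ℝ => evalAt P (r * exp (x.1 * I), s * exp (x.2 * I))) :=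
  (continuous_evalAt P).comp (by fun_prop)

lemma torusInt_add (P R : MvPolynomial (Fin 4) ℂ) (r s : ℝ) :
    torusInt (P + R) r s = torusInt P r s + torusInt R r s := by
  have hP := continuous_torus P r s
  have hR := continuous_torus R r s
  unfold torusInt
  rw [← intervalIntegral.integral_add]
  · refine intervalIntegral.integral_congr fun θ _ => ?_
    rw [← intervalIntegral.integral_add]
    · simp [evalAt]
    · exact (hP.comp (by fun_prop : Continuous fun τ : ℝ => (θ, τ))).intervalIntegrable _ _
    · exact (hR.comp (by fun_prop : Continuous fun τ : ℝ => (θ, τ))).intervalIntegrable _ _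
  · exact (intervalIntegral.continuous_parametric_intervalIntegral_of_continuous'
      (f := fun θ τ : ℝ => evalAt P (r * exp (θ * I), s * exp (τ * I)))
      hP _ _).intervalIntegrable _ _
  · exact (intervalIntegral.continuous_parametric_intervalIntegral_of_continuous'
      (f := fun θ τ : ℝ => evalAt R (r * exp (θ * I), s * exp (τ * I)))
      hR _ _).intervalIntegrable _ _

lemma circle_integral_monomial (a b : ℕ) :
    ∫ θ in (0:ℝ)..(2 * Real.pi), exp (θ * I) ^ a * conj (exp (θ * I)) ^ b =
      if a = b then 2 * (Real.pi : ℂ) else 0 := by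
  have h : ∀ θ : ℝ, exp (θ * I) ^ a * conj (exp (θ * I)) ^ b =
      exp (((a : ℂ) - b) * I * θ) := by
    intro θ
    rw [← exp_conj, ← exp_nat_mul, ← exp_nat_mul, ← exp_add]
    congr 1
    simp
    ring
  simp only [h]
  split_ifs with hab
  · subst hab; simp
  · have hc : ((a : ℂ) - b) * I ≠ 0 :=
      mul_ne_zero (sub_ne_zero.2 (by exact_mod_cast hab)) I_ne_zero
    rw [integral_exp_mul_complex hc]
    have : exp (((a : ℂ) - b) * I * ((2 * Real.pi : ℝ) : ℂ)) = 1 := by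
      rw [exp_eq_one_iff]
      exact ⟨(a : ℤ) - b, by push_cast; ring⟩
    rw [this]; simp

lemma torusInt_monomial (m : Fin 4 →₀ ℕ) (c : ℂ) (r s : ℝ) :
    torusInt (MvPolynomial.monomial m c) r s =
      c * (r : ℂ) ^ (m 0 + m 1) * (s : ℂ) ^ (m 2 + m 3) *
        (if m 0 = m 1 then 2 * (Real.pi : ℂ) else 0) *
        (if m 2 = m 3 then 2 * (Real.pi : ℂ) else 0) := by
  rw [← circle_integral_monomial, ← circle_integral_monomial]
  have h : ∀ θ τ : ℝ, evalAt (MvPolynomial.monomial m c) (r * exp (θ * I), s * exp (τ * I)) =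
      (c * (r : ℂ) ^ (m 0 + m 1) * (s : ℂ) ^ (m 2 + m 3) *
        (exp (θ * I) ^ m 0 * conj (exp (θ * I)) ^ m 1)) *
        (exp (τ * I) ^ m 2 * conj (exp (τ * I)) ^ m 3) := by
    intro θ τ
    rw [evalAt, MvPolynomial.eval_monomial, Finsupp.prod_fintype _ _ (by simp)]
    simp [Fin.prod_univ_four, mul_pow, pow_add]
    ring
  simp only [torusInt, h, intervalIntegral.integral_const_mul, intervalIntegral.integral_mul_const]

/-! ### The radial Euler operator -/

lemma euler_sq_monomial (A : ℂ) (n : ℕ) :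
    (Polynomial.X * Polynomial.derivative (Polynomial.X *
      Polynomial.derivative (Polynomial.C A * Polynomial.X ^ n))).eval 1 = (n : ℂ) ^ 2 * A := by
  rcases n with _ | n
  · simp
  · simp [Polynomial.derivative_X_pow]
    ring

/-- The radial profile of the torus integral in the first radius is a polynomial, and applying
`(X d/dX)²` to it at `1` gives the torus integral of `4 |z₁|² ∂₁∂̄₁ P`: both sides only see
monomials with equal exponents of `z₁` and `z̄₁`. -/
lemma radial_fst (P : MvPolynomial (Fin 4) ℂ) (r s : ℝ) :
    ∃ S : Polynomial ℂ, (∀ t : ℝ, torusInt P (t * r) s = S.eval (t : ℂ)) ∧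
      (Polynomial.X * Polynomial.derivative (Polynomial.X * Polynomial.derivative S)).eval 1 =
        4 * (r : ℂ) ^ 2 * torusInt (MvPolynomial.pderiv 0 (MvPolynomial.pderiv 1 P)) r s := by
  induction P using MvPolynomial.induction_on' with
  | monomial m c =>
    refine ⟨Polynomial.C (torusInt (MvPolynomial.monomial m c) r s) *
      Polynomial.X ^ (m 0 + m 1), fun t => ?_, ?_⟩
    · simp only [torusInt_monomial]
      simp [mul_pow]
      ring_nf
    · rw [euler_sq_monomial, MvPolynomial.pderiv_monomial, MvPolynomial.pderiv_monomial,
        torusInt_monomial, torusInt_monomial]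
      simp only [Finsupp.tsub_apply, Finsupp.single_apply]
      generalize m 0 = a
      generalize m 1 = b
      rcases a with _ | a <;> rcases b with _ | b <;> simp
      by_cases hab : a = b
      · subst hab
        simp
        ring_nf
      · simp [hab]
  | add P R hP hR =>
    obtain ⟨S, hS, hS'⟩ := hP
    obtain ⟨T, hT, hT'⟩ := hR
    refine ⟨S + T, fun t => by rw [torusInt_add, hS, hT, Polynomial.eval_add], ?_⟩
    simp only [map_add, mul_add, Polynomial.eval_add, torusInt_add, hS', hT']

/-- The analogue of `radial_fst` for the second variable. -/
lemma radial_snd (P : MvPolynomial (Fin 4) ℂ) (r s : ℝ) :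
    ∃ S : Polynomial ℂ, (∀ t : ℝ, torusInt P r (t * s) = S.eval (t : ℂ)) ∧
      (Polynomial.X * Polynomial.derivative (Polynomial.X * Polynomial.derivative S)).eval 1 =
        4 * (s : ℂ) ^ 2 * torusInt (MvPolynomial.pderiv 2 (MvPolynomial.pderiv 3 P)) r s := by
  induction P using MvPolynomial.induction_on' with
  | monomial m c =>
    refine ⟨Polynomial.C (torusInt (MvPolynomial.monomial m c) r s) *
      Polynomial.X ^ (m 2 + m 3), fun t => ?_, ?_⟩
    · simp only [torusInt_monomial]
      simp [mul_pow]
      ring_nf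
    · rw [euler_sq_monomial, MvPolynomial.pderiv_monomial, MvPolynomial.pderiv_monomial,
        torusInt_monomial, torusInt_monomial]
      simp only [Finsupp.tsub_apply, Finsupp.single_apply]
      generalize m 2 = a
      generalize m 3 = b
      rcases a with _ | a <;> rcases b with _ | b <;> simp
      by_cases hab : a = b
      · subst hab
        simp
        ring_nf
      · simp [hab]
  | add P R hP hR =>
    obtain ⟨S, hS, hS'⟩ := hP
    obtain ⟨T, hT, hT'⟩ := hR
    refine ⟨S + T, fun t => by rw [torusInt_add, hS, hT, Polynomial.eval_add], ?_⟩
    simp only [map_add, mul_add, Polynomial.eval_add, torusInt_add, hS', hT']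

lemma euler_sq (S : Polynomial ℂ) (A : ℂ) (p : ℕ)
    (h : ∀ t : ℝ, 0 < t → S.eval (t : ℂ) = (t : ℂ) ^ (2 * p) * A) :
    (Polynomial.X * Polynomial.derivative (Polynomial.X * Polynomial.derivative S)).eval 1 =
      4 * (p : ℂ) ^ 2 * A := by
  have hS : S = Polynomial.C A * Polynomial.X ^ (2 * p) := by
    apply Polynomial.eq_of_infinite_eval_eq
    apply ((Set.Ioi_infinite (0:ℝ)).image (ofReal_injective.injOn)).mono
    rintro _ ⟨t, ht, rfl⟩
    change S.eval (t : ℂ) = _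
    rw [h t ht]
    simp
    ring
  rw [hS, euler_sq_monomial]
  push_cast
  ring

/-! ### Vanishing and the conclusion -/

/-- A nonnegative continuous function with vanishing integral over every torus of positive radii
is zero: it vanishes where both coordinates are nonzero, and this set is dense. -/
lemma eq_zero_of_torus (f : ℂ × ℂ → ℝ) (hf : Continuous f) (h0 : ∀ z, 0 ≤ f z)
    (hint : ∀ r s : ℝ, 0 < r → 0 < s → ∫ θ in (0:ℝ)..(2 * Real.pi), ∫ τ in (0:ℝ)..(2 * Real.pi),
      f (r * exp (θ * I), s * exp (τ * I)) = 0) (z : ℂ × ℂ) : f z = 0 := by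
  have hpi := Real.two_pi_pos
  have key : ∀ r s : ℝ, 0 < r → 0 < s → ∀ θ ∈ Icc (0:ℝ) (2 * Real.pi),
      ∀ τ ∈ Icc (0:ℝ) (2 * Real.pi), f (r * exp (θ * I), s * exp (τ * I)) = 0 := by
    intro r s hr hs θ hθ τ hτ
    by_contra hne
    have hc : Continuous (fun x : ℝ × ℝ => f (r * exp (x.1 * I), s * exp (x.2 * I))) :=
      hf.comp (by fun_prop)
    have h1 : 0 < ∫ τ in (0:ℝ)..(2 * Real.pi), f (r * exp (θ * I), s * exp (τ * I)) :=
      intervalIntegral.integral_pos hpi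
        (hc.comp (by fun_prop : Continuous fun τ : ℝ => (θ, τ))).continuousOn
        (fun _ _ => h0 _) ⟨τ, hτ, lt_of_le_of_ne (h0 _) (Ne.symm hne)⟩
    have h2 := intervalIntegral.integral_pos hpi
        (intervalIntegral.continuous_parametric_intervalIntegral_of_continuous'
          (f := fun θ τ : ℝ => f (r * exp (θ * I), s * exp (τ * I))) hc 0
            (2 * Real.pi)).continuousOn
        (fun _ _ => intervalIntegral.integral_nonneg hpi.le fun _ _ => h0 _) ⟨θ, hθ, h1⟩
    exact h2.ne' (hint r s hr hs)
  have polar : ∀ w : ℂ, w ≠ 0 → ∃ r : ℝ, 0 < r ∧ ∃ θ ∈ Icc (0:ℝ) (2 * Real.pi),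
      w = r * exp (θ * I) := by
    intro w hw
    refine ⟨‖w‖, norm_pos_iff.2 hw, ?_⟩
    have ha := arg_le_pi w
    have hb := neg_pi_lt_arg w
    by_cases hneg : 0 ≤ arg w
    · exact ⟨arg w, ⟨hneg, by linarith⟩, (norm_mul_exp_arg_mul_I w).symm⟩
    · refine ⟨arg w + 2 * Real.pi, ⟨by linarith, by linarith⟩, ?_⟩
      push_cast
      rw [add_mul, exp_add, exp_two_pi_mul_I, mul_one, norm_mul_exp_arg_mul_I]
  have hd : Dense (({0}ᶜ : Set ℂ) ×ˢ ({0}ᶜ : Set ℂ)) :=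
    (dense_compl_singleton 0).prod (dense_compl_singleton 0)
  have hz : f = fun _ => 0 := by
    apply Continuous.ext_on hd hf continuous_const
    rintro ⟨z, w⟩ ⟨hz, hw⟩
    obtain ⟨r, hr, θ, hθ, rfl⟩ := polar z hz
    obtain ⟨s, hs, τ, hτ, rfl⟩ := polar w hw
    exact key r s hr hs θ hθ τ hτ
  exact congrFun hz z

lemma torusInt_eq_ofReal (f : ℂ × ℂ → ℝ) (P : MvPolynomial (Fin 4) ℂ)
    (h : ∀ z, (f z : ℂ) = evalAt P z) (r s : ℝ) :
    torusInt P r s = ((∫ θ in (0:ℝ)..(2 * Real.pi), ∫ τ in (0:ℝ)..(2 * Real.pi),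
      f (r * exp (θ * I), s * exp (τ * I)) : ℝ) : ℂ) := by
  simp only [torusInt, ← h, intervalIntegral.integral_ofReal]

/-- a plurisubharmonic, non-harmonic, `(2p,2q)`-bihomogeneous
polynomial has strictly positive average over the torus, i.e. the coefficient of
`|z₁|^{2p}|z₂|^{2q}` is positive. -/
theorem positive_torus_average (p q : ℕ) (hp : 0 < p) (hq : 0 < q) (Q : ℂ × ℂ → ℝ)
    (hpoly : IsRealPoly2 Q) (hpsh : IsPsh Q) (hnh : ¬ ∀ z, lap2 Q z = 0)
    (hhom1 : ∀ t : ℝ, 0 < t → ∀ z : ℂ × ℂ, Q ((t : ℂ) * z.1, z.2) = t ^ (2 * p) * Q z)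
    (hhom2 : ∀ t : ℝ, 0 < t → ∀ z : ℂ × ℂ, Q (z.1, (t : ℂ) * z.2) = t ^ (2 * q) * Q z) :
    0 < ∫ θ in (0:ℝ)..(2 * Real.pi), ∫ τ in (0:ℝ)..(2 * Real.pi),
        Q (Complex.exp (θ * Complex.I), Complex.exp (τ * Complex.I)) := by
  obtain ⟨P, hP⟩ := hpoly
  replace hP : ∀ z, (Q z : ℂ) = evalAt P z := hP
  have hfun : (fun w => (Q w : ℂ)) = evalAt P := funext hP
  have hconj : (fun w => (Q w : ℂ)) = evalAt (conjPoly P) := by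
    ext w; rw [evalAt_conjPoly, ← hP, conj_ofReal]
  have m1 : ∀ z, mixedDeriv Q (1, 0) (1, 0) z =
      evalAt (MvPolynomial.pderiv 0 (MvPolynomial.pderiv 1 P)) z := by
    intro z; rw [mixedDeriv, hfun, wdbar_evalAt_fst, wd_evalAt_fst]
  have m2 : ∀ z, mixedDeriv Q (0, 1) (0, 1) z =
      evalAt (MvPolynomial.pderiv 2 (MvPolynomial.pderiv 3 P)) z := by
    intro z; rw [mixedDeriv, hfun, wdbar_evalAt_snd, wd_evalAt_snd]
  -- The diagonal mixed derivatives are real, since `P` may be replaced by `conjPoly P`.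
  have r1 : ∀ z, ((mixedDeriv Q (1, 0) (1, 0) z).re : ℂ) =
      evalAt (MvPolynomial.pderiv 0 (MvPolynomial.pderiv 1 P)) z := by
    intro z
    rw [← m1, ← conj_eq_iff_re]
    conv_rhs => rw [mixedDeriv, hconj, wdbar_evalAt_fst, wd_evalAt_fst]
    rw [m1, ← evalAt_conjPoly, pderiv_pderiv_comm, ← pderiv_conjPoly, ← pderiv_conjPoly]
    rfl
  have r2 : ∀ z, ((mixedDeriv Q (0, 1) (0, 1) z).re : ℂ) =
      evalAt (MvPolynomial.pderiv 2 (MvPolynomial.pderiv 3 P)) z := by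
    intro z
    rw [← m2, ← conj_eq_iff_re]
    conv_rhs => rw [mixedDeriv, hconj, wdbar_evalAt_snd, wd_evalAt_snd]
    rw [m2, ← evalAt_conjPoly, pderiv_pderiv_comm, ← pderiv_conjPoly, ← pderiv_conjPoly]
    rfl
  have n1 : ∀ z, 0 ≤ (mixedDeriv Q (1, 0) (1, 0) z).re := by
    intro z; simpa [leviForm] using hpsh z (1, 0)
  have n2 : ∀ z, 0 ≤ (mixedDeriv Q (0, 1) (0, 1) z).re := by
    intro z; simpa [leviForm] using hpsh z (0, 1)
  have c1 : Continuous fun z => (mixedDeriv Q (1, 0) (1, 0) z).re := by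
    simp only [m1]; exact continuous_re.comp (continuous_evalAt _)
  have c2 : Continuous fun z => (mixedDeriv Q (0, 1) (0, 1) z).re := by
    simp only [m2]; exact continuous_re.comp (continuous_evalAt _)
  have s1 : ∀ r s t : ℝ, 0 < t → torusInt P (t * r) s = (t : ℂ) ^ (2 * p) * torusInt P r s := by
    intro r s t ht
    simp only [torusInt, ← intervalIntegral.integral_const_mul]
    refine intervalIntegral.integral_congr fun θ _ => intervalIntegral.integral_congr fun τ _ => ?_
    have := hhom1 t ht (r * exp (θ * I), s * exp (τ * I))
    simp only [← hP]
    rw [ofReal_mul, mul_assoc, this]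
    push_cast; rfl
  have s2 : ∀ r s t : ℝ, 0 < t → torusInt P r (t * s) = (t : ℂ) ^ (2 * q) * torusInt P r s := by
    intro r s t ht
    simp only [torusInt, ← intervalIntegral.integral_const_mul]
    refine intervalIntegral.integral_congr fun θ _ => intervalIntegral.integral_congr fun τ _ => ?_
    have := hhom2 t ht (r * exp (θ * I), s * exp (τ * I))
    simp only [← hP]
    rw [ofReal_mul, mul_assoc, this]
    push_cast; rfl
  have e1 : ∀ r s : ℝ, (p : ℂ) ^ 2 * torusInt P r s = (r : ℂ) ^ 2 *
      torusInt (MvPolynomial.pderiv 0 (MvPolynomial.pderiv 1 P)) r s := by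
    intro r s
    obtain ⟨S, hS, hS'⟩ := radial_fst P r s
    have := euler_sq S (torusInt P r s) p fun t ht => by rw [← hS, s1 r s t ht]
    linear_combination (1 / 4 : ℂ) * (hS' - this)
  have e2 : ∀ r s : ℝ, (q : ℂ) ^ 2 * torusInt P r s = (s : ℂ) ^ 2 *
      torusInt (MvPolynomial.pderiv 2 (MvPolynomial.pderiv 3 P)) r s := by
    intro r s
    obtain ⟨S, hS, hS'⟩ := radial_snd P r s
    have := euler_sq S (torusInt P r s) q fun t ht => by rw [← hS, s2 r s t ht]
    linear_combination (1 / 4 : ℂ) * (hS' - this)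
  have hA : torusInt P 1 1 = ((∫ θ in (0:ℝ)..(2 * Real.pi), ∫ τ in (0:ℝ)..(2 * Real.pi),
      Q (exp (θ * I), exp (τ * I)) : ℝ) : ℂ) := by
    rw [torusInt_eq_ofReal Q P hP]; simp
  have hscale : ∀ r s : ℝ, 0 < r → 0 < s →
      torusInt P r s = (r : ℂ) ^ (2 * p) * ((s : ℂ) ^ (2 * q) * torusInt P 1 1) := by
    intro r s hr hs
    rw [← s2 1 1 s hs, ← s1 1 _ r hr, mul_one, mul_one]
  have hpi := Real.two_pi_pos
  refine lt_of_le_of_ne ?_ fun hzero => hnh fun z => ?_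
  · have h := e1 1 1
    rw [hA, torusInt_eq_ofReal _ _ r1] at h
    norm_cast at h
    rw [one_pow, Nat.cast_one, one_mul] at h
    refine nonneg_of_mul_nonneg_right (h.symm ▸ ?_) (by positivity : (0:ℝ) < ((p ^ 2 : ℕ) : ℝ))
    exact intervalIntegral.integral_nonneg hpi.le fun _ _ =>
      intervalIntegral.integral_nonneg hpi.le fun _ _ => n1 _
  · have hall : ∀ r s : ℝ, 0 < r → 0 < s → torusInt P r s = 0 := by
      intro r s hr hs
      rw [hscale r s hr hs, hA, ← hzero]; simp
    have z1 := eq_zero_of_torus _ c1 n1 (fun r s hr hs => by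
      have h := e1 r s
      rw [hall r s hr hs, torusInt_eq_ofReal _ _ r1, mul_zero] at h
      have hr' : (r : ℂ) ^ 2 ≠ 0 := pow_ne_zero _ (by exact_mod_cast hr.ne')
      exact_mod_cast (mul_eq_zero.1 h.symm).resolve_left hr') z
    have z2 := eq_zero_of_torus _ c2 n2 (fun r s hr hs => by
      have h := e2 r s
      rw [hall r s hr hs, torusInt_eq_ofReal _ _ r2, mul_zero] at h
      have hs' : (s : ℂ) ^ 2 ≠ 0 := pow_ne_zero _ (by exact_mod_cast hs.ne')
      exact_mod_cast (mul_eq_zero.1 h.symm).resolve_left hs') z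
    rw [lap2, m1, m2, ← r1, ← r2, z1, z2]
    simp


end
end
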